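/- arXiv:math/0606007 — 4 statements merged into one kernel-verified Lean document; each statement's English description precedes it below -/
import Mathlib

section
/- Let P be a polygonal curve in ℝ^d with vertex list v₀, v₁, …, vₙ in which no two consecutive vertices are equal, and let P' be the polygon obtained from P by deleting one interior vertex v_j (0 < j < n). Then TC(P') ≤ TC(P). Moreover, equality holds if v_{j−1}, v_j, v_{j+1} are collinear with v_j lying on the segment from v_{j−1} to v_{j+1}. -/
open Set Filter MeasureTheory
open scoped ENNReal NNReal RealInnerProductSpace

noncomputable section

/-- The parameters `u 0 < u 1 < ⋯ < u m` of a polygon inscribed in (the restriction to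
`[a,b]` of) a curve: strictly increasing parameters lying in `[a,b]`. -/
def InscribedIn (a b : ℝ) (m : ℕ) (u : ℕ → ℝ) : Prop :=
  (∀ i < m, u i < u (i + 1)) ∧ ∀ i ≤ m, u i ∈ Set.Icc a b

/-- The length of the polygon inscribed in the curve `γ` with parameters `u 0, …, u m`:
the sum of the euclidean lengths of its edges. -/
def polyLen {E : Type*} [NormedAddCommGroup E] (γ : ℝ → E) (m : ℕ) (u : ℕ → ℝ) : ℝ :=
  ∑ i ∈ Finset.range m, ‖γ (u (i + 1)) - γ (u i)‖

/-- The (Jordan) length of the arc `γ : [a,b] → E`: the supremum of the lengths of all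
inscribed polygons, valued in `[0,∞]`. -/
def arcLen {E : Type*} [NormedAddCommGroup E] (γ : ℝ → E) (a b : ℝ) : ℝ≥0∞ :=
  ⨆ (m : ℕ) (u : ℕ → ℝ) (_ : InscribedIn a b m u), ENNReal.ofReal (polyLen γ m u)

/-- The list of vertices of the polygon inscribed in `γ` with parameters `u 0, …, u m`. -/
def vertexList {E : Type*} (γ : ℝ → E) (m : ℕ) (u : ℕ → ℝ) : List E :=
  (List.range (m + 1)).map fun i => γ (u i)

/-- Collapse consecutive equal entries of a list to single entries. -/
def collapse {E : Type*} (l : List E) : List E :=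
  @List.destutter E (· ≠ ·) (Classical.decRel _) l

/-- The sum of the turning angles of a polygon given by its list of vertices: at each
interior vertex, the angle in `[0,π]` between the incoming and outgoing edge vectors. -/
def turnSum {E : Type*} [NormedAddCommGroup E] [InnerProductSpace ℝ E] : List E → ℝ
  | a :: b :: c :: l => InnerProductGeometry.angle (b - a) (c - b) + turnSum (b :: c :: l)
  | _ => 0

/-- The sum, at each interior vertex, of the euclidean distance `‖u₊ - u₋‖` between the
unit tangent vectors of the incoming and outgoing edges (so a corner of turning angle θ
contributes `2 sin(θ/2)`). -/
def starSum {E : Type*} [NormedAddCommGroup E] [InnerProductSpace ℝ E] : List E → ℝ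
  | a :: b :: c :: l =>
      ‖(‖c - b‖⁻¹ • (c - b)) - (‖b - a‖⁻¹ • (b - a))‖ + starSum (b :: c :: l)
  | _ => 0

/-- The total curvature of the polygon inscribed in `γ` with parameters `u 0, …, u m`:
after collapsing consecutive equal vertices, the sum of its turning angles. -/
def polyTC {E : Type*} [NormedAddCommGroup E] [InnerProductSpace ℝ E]
    (γ : ℝ → E) (m : ℕ) (u : ℕ → ℝ) : ℝ :=
  turnSum (collapse (vertexList γ m u))

/-- The total curvature of the arc `γ : [a,b] → E`: the supremum over all inscribed
polygons of their total curvature, valued in `[0,∞]`. -/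
def arcTC {E : Type*} [NormedAddCommGroup E] [InnerProductSpace ℝ E]
    (γ : ℝ → E) (a b : ℝ) : ℝ≥0∞ :=
  ⨆ (m : ℕ) (u : ℕ → ℝ) (_ : InscribedIn a b m u), ENNReal.ofReal (polyTC γ m u)

/-- The euclidean total curvature `TC*` of the polygon inscribed in `γ` with parameters
`u 0, …, u m`. -/
def polyTCStar {E : Type*} [NormedAddCommGroup E] [InnerProductSpace ℝ E]
    (γ : ℝ → E) (m : ℕ) (u : ℕ → ℝ) : ℝ :=
  starSum (collapse (vertexList γ m u))

/-- The euclidean total curvature `TC*` of the arc `γ : [a,b] → E`. -/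
def arcTCStar {E : Type*} [NormedAddCommGroup E] [InnerProductSpace ℝ E]
    (γ : ℝ → E) (a b : ℝ) : ℝ≥0∞ :=
  ⨆ (m : ℕ) (u : ℕ → ℝ) (_ : InscribedIn a b m u), ENNReal.ofReal (polyTCStar γ m u)

/-- Cyclically ordered parameters `u 0 < ⋯ < u m` in `[0,1)` of a polygon inscribed in a
loop `γ : ℝ/ℤ → E`. -/
def LoopInscribed (m : ℕ) (u : ℕ → ℝ) : Prop :=
  (∀ i < m, u i < u (i + 1)) ∧ ∀ i ≤ m, u i ∈ Set.Ico (0 : ℝ) 1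

/-- The list of vertices of the polygon inscribed in the loop `γ` with parameters
`u 0, …, u m`. -/
def loopVertexList {E : Type*} (γ : AddCircle (1 : ℝ) → E) (m : ℕ) (u : ℕ → ℝ) : List E :=
  (List.range (m + 1)).map fun i => γ (u i : ℝ)

/-- The sum of the lengths of the successive edges of a list of points. -/
def lenList {E : Type*} [NormedAddCommGroup E] : List E → ℝ
  | a :: b :: l => ‖b - a‖ + lenList (b :: l)
  | _ => 0

/-- The length of the closed polygon inscribed in the loop `γ` with parameters
`u 0, …, u m`: the sum of the edge lengths, indices taken cyclically. -/
def loopPolyLen {E : Type*} [NormedAddCommGroup E]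
    (γ : AddCircle (1 : ℝ) → E) (m : ℕ) (u : ℕ → ℝ) : ℝ :=
  lenList (loopVertexList γ m u ++ (loopVertexList γ m u).take 1)

/-- The length of a loop `γ : ℝ/ℤ → E`: the supremum of the lengths of inscribed closed
polygons, valued in `[0,∞]`. -/
def loopLen {E : Type*} [NormedAddCommGroup E] (γ : AddCircle (1 : ℝ) → E) : ℝ≥0∞ :=
  ⨆ (m : ℕ) (u : ℕ → ℝ) (_ : LoopInscribed m u), ENNReal.ofReal (loopPolyLen γ m u)

open Classical in
/-- Collapse consecutive equal vertices of a *cyclic* list of vertices: collapse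
consecutive duplicates, also across the wrap-around. -/
def cyclicCollapse {E : Type*} (l : List E) : List E :=
  if 2 ≤ (collapse l).length ∧ (collapse l).getLast? = (collapse l).head? then
    (collapse l).dropLast
  else collapse l

/-- The total curvature of the closed polygon inscribed in the loop `γ` with parameters
`u 0, …, u m`: after cyclically collapsing consecutive equal vertices, the sum of the
turning angles at all of its vertices (every vertex of a closed polygon is interior). -/
def loopPolyTC {E : Type*} [NormedAddCommGroup E] [InnerProductSpace ℝ E]
    (γ : AddCircle (1 : ℝ) → E) (m : ℕ) (u : ℕ → ℝ) : ℝ :=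
  turnSum (cyclicCollapse (loopVertexList γ m u) ++
    (cyclicCollapse (loopVertexList γ m u)).take 2)

/-- The total curvature of a loop `γ : ℝ/ℤ → E`: the supremum over all inscribed closed
polygons of their total curvature, valued in `[0,∞]`. -/
def loopTC {E : Type*} [NormedAddCommGroup E] [InnerProductSpace ℝ E]
    (γ : AddCircle (1 : ℝ) → E) : ℝ≥0∞ :=
  ⨆ (m : ℕ) (u : ℕ → ℝ) (_ : LoopInscribed m u), ENNReal.ofReal (loopPolyTC γ m u)

/-- The euclidean total curvature `TC*` of the closed inscribed polygon. -/
def loopPolyTCStar {E : Type*} [NormedAddCommGroup E] [InnerProductSpace ℝ E]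
    (γ : AddCircle (1 : ℝ) → E) (m : ℕ) (u : ℕ → ℝ) : ℝ :=
  starSum (cyclicCollapse (loopVertexList γ m u) ++
    (cyclicCollapse (loopVertexList γ m u)).take 2)

/-- The euclidean total curvature `TC*` of a loop `γ : ℝ/ℤ → E`. -/
def loopTCStar {E : Type*} [NormedAddCommGroup E] [InnerProductSpace ℝ E]
    (γ : AddCircle (1 : ℝ) → E) : ℝ≥0∞ :=
  ⨆ (m : ℕ) (u : ℕ → ℝ) (_ : LoopInscribed m u), ENNReal.ofReal (loopPolyTCStar γ m u)

end

/-!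
Collapsing repeated vertices drops the zero edge vectors, so the total curvature of a polygon is
the sum of the angles between consecutive nonzero edge vectors. By the triangle inequality for
angles, this sum does not grow when vectors are dropped. Deleting a vertex replaces two consecutive
edge vectors `x, y` by `x + y`, whose direction lies on the shortest arc from that of `x` to that
of `y`. Inserting `x + y` between `x` and `y` is therefore free, and dropping `x` and `y` afterwards
gives the inequality. Conversely, `x, y` is part of `x + y, x, y, x + y`, whose angle sum exceeds
that of `x + y` by `2 * angle x y`; this vanishes when the deleted vertex lies between its
neighbours.
-/

open InnerProductGeometry

section Collapse

variable {α : Type*}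

theorem collapse_cons_cons_self (a : α) (l : List α) : collapse (a :: a :: l) = collapse (a :: l) :=
  if_neg (not_not_intro rfl)

theorem collapse_cons_cons_of_ne {a b : α} (h : a ≠ b) (l : List α) :
    collapse (a :: b :: l) = a :: collapse (b :: l) :=
  if_pos h

theorem exists_collapse_cons_eq_cons (a : α) (l : List α) : ∃ l', collapse (a :: l) = a :: l' := by
  induction l with
  | nil => exact ⟨[], rfl⟩
  | cons b l ih =>
    rcases eq_or_ne a b with rfl | hab
    · rwa [collapse_cons_cons_self]
    · exact ⟨_, collapse_cons_cons_of_ne hab l⟩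

end Collapse

section Edges

variable {E : Type*} [AddGroup E]

/-- The edge vectors of the polygon with the given vertex list, which turn the deletion of a vertex
into the addition of two consecutive vectors. -/
def edgeVectors : List E → List E
  | a :: b :: l => (b - a) :: edgeVectors (b :: l)
  | _ => []

theorem edgeVectors_append_cons (l₁ : List E) (a : E) (l₂ : List E) :
    edgeVectors (l₁ ++ a :: l₂) = edgeVectors (l₁ ++ [a]) ++ edgeVectors (a :: l₂) := by
  induction l₁ with
  | nil => simp [edgeVectors]
  | cons p l₁ ih => cases l₁ <;> simp_all [edgeVectors]

theorem edgeVectors_append_cons_cons_cons (l₁ : List E) (a b c : E) (l₂ : List E) :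
    edgeVectors (l₁ ++ a :: b :: c :: l₂) =
      edgeVectors (l₁ ++ [a]) ++ (b - a) :: (c - b) :: edgeVectors (c :: l₂) := by
  rw [edgeVectors_append_cons, edgeVectors, edgeVectors]

theorem edgeVectors_sublist_cons (a : E) (l : List E) :
    (edgeVectors l).Sublist (edgeVectors (a :: l)) := by
  cases l <;> simp [edgeVectors]

theorem edgeVectors_sublist_concat (l : List E) (a : E) :
    (edgeVectors l).Sublist (edgeVectors (l ++ [a])) := by
  rcases l.eq_nil_or_concat' with rfl | ⟨l, b, rfl⟩
  · exact List.Sublist.refl _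
  · rw [List.append_assoc, List.singleton_append, edgeVectors_append_cons l b [a]]
    exact List.sublist_append_left _ _

open Classical in
theorem edgeVectors_collapse (l : List E) :
    edgeVectors (collapse l) = (edgeVectors l).filter (· ≠ 0) := by
  induction l with
  | nil => rfl
  | cons a l ih =>
    cases l with
    | nil => rfl
    | cons b l =>
      rcases eq_or_ne a b with rfl | hab
      · simp [collapse_cons_cons_self, ih, edgeVectors]
      · obtain ⟨l', hl'⟩ := exists_collapse_cons_eq_cons b l
        rw [hl'] at ih
        simp [collapse_cons_cons_of_ne hab, hl', edgeVectors, ih, sub_ne_zero.2 hab.symm]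

end Edges

section AngleSum

variable {E : Type*} [NormedAddCommGroup E] [InnerProductSpace ℝ E]

/-- The sum of the angles between consecutive vectors of a list. For nonzero vectors this is the
length of the spherical polygon through their directions. -/
noncomputable def angleSum : List E → ℝ
  | x :: y :: l => angle x y + angleSum (y :: l)
  | _ => 0

theorem turnSum_eq_angleSum_edgeVectors (l : List E) : turnSum l = angleSum (edgeVectors l) := by
  fun_induction turnSum l with
  | case1 a b c l ih => simp [edgeVectors, angleSum, ih]
  | case2 l h =>
    rcases l with _ | ⟨a, _ | ⟨b, _ | ⟨c, l⟩⟩⟩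
    case cons.cons.cons => exact (h a b c l rfl).elim
    all_goals rfl

theorem angleSum_append_cons (l₁ : List E) (x : E) (l₂ : List E) :
    angleSum (l₁ ++ x :: l₂) = angleSum (l₁ ++ [x]) + angleSum (x :: l₂) := by
  induction l₁ with
  | nil => simp [angleSum]
  | cons p l₁ ih => cases l₁ <;> simp_all [angleSum, add_assoc]

theorem angleSum_le_cons (x : E) (l : List E) : angleSum l ≤ angleSum (x :: l) := by
  cases l with
  | nil => simp [angleSum]
  | cons y l => exact le_add_of_nonneg_left (angle_nonneg x y)

theorem angleSum_cons_le_cons_cons (x y : E) (l : List E) :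
    angleSum (x :: l) ≤ angleSum (x :: y :: l) := by
  cases l with
  | nil => simpa [angleSum] using angle_nonneg x y
  | cons z l =>
    simp only [angleSum]
    linarith [angle_le_angle_add_angle x y z]

theorem angleSum_cons_le_of_sublist {l₁ l₂ : List E} (h : l₁.Sublist l₂) (x : E) :
    angleSum (x :: l₁) ≤ angleSum (x :: l₂) := by
  induction h generalizing x with
  | slnil => rfl
  | cons y _ ih => exact (angleSum_cons_le_cons_cons x y _).trans (add_le_add_right (ih y) _)
  | cons_cons y _ ih => exact add_le_add_right (ih y) _

theorem angleSum_le_of_sublist {l₁ l₂ : List E} (h : l₁.Sublist l₂) :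
    angleSum l₁ ≤ angleSum l₂ := by
  induction h with
  | slnil => rfl
  | cons x _ ih => exact ih.trans (angleSum_le_cons x _)
  | cons_cons x h _ => exact angleSum_cons_le_of_sublist h x

theorem angleSum_append_cons_add_cons (l₁ : List E) (x : E) {y : E} (hy : y ≠ 0) (l₂ : List E) :
    angleSum (l₁ ++ x :: (x + y) :: y :: l₂) = angleSum (l₁ ++ x :: y :: l₂) := by
  rw [angleSum_append_cons, angleSum_append_cons l₁ x (y :: l₂)]
  simp only [angleSum]
  rw [angle_eq_angle_add_add_angle_add x hy, angle_comm (x + y) y, add_assoc]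

theorem angleSum_append_add_cons_le (l₁ : List E) (x y : E) (l₂ : List E) :
    angleSum (l₁ ++ (x + y) :: l₂) ≤ angleSum (l₁ ++ x :: y :: l₂) := by
  rcases eq_or_ne y 0 with rfl | hy
  · exact angleSum_le_of_sublist (by simp)
  · rw [← angleSum_append_cons_add_cons l₁ x hy l₂]
    exact angleSum_le_of_sublist (by simp)

theorem angleSum_append_cons_cons_le (l₁ : List E) (x : E) {y : E} (hy : y ≠ 0) (l₂ : List E) :
    angleSum (l₁ ++ x :: y :: l₂) ≤ angleSum (l₁ ++ (x + y) :: l₂) + 2 * angle x y :=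
  calc
    angleSum (l₁ ++ x :: y :: l₂) ≤ angleSum (l₁ ++ (x + y) :: x :: y :: (x + y) :: l₂) :=
      angleSum_le_of_sublist (by simp)
    _ = angleSum (l₁ ++ (x + y) :: l₂) + 2 * angle x y := by
      rw [angleSum_append_cons, angleSum_append_cons l₁ (x + y) l₂]
      simp only [angleSum]
      linarith [angle_eq_angle_add_add_angle_add x hy, angle_comm (x + y) x]

theorem angle_eq_zero_of_sameRay {x y : E} (hx : x ≠ 0) (hy : y ≠ 0) (h : SameRay ℝ x y) :
    angle x y = 0 := by
  obtain ⟨r, hr, rfl⟩ := h.exists_pos_left hx hy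
  exact angle_eq_zero_iff.2 ⟨hx, r, hr, rfl⟩

theorem angleSum_append_add_cons_of_sameRay (l₁ : List E) {x y : E} (hx : x ≠ 0) (hy : y ≠ 0)
    (h : SameRay ℝ x y) (l₂ : List E) :
    angleSum (l₁ ++ (x + y) :: l₂) = angleSum (l₁ ++ x :: y :: l₂) := by
  refine (angleSum_append_add_cons_le l₁ x y l₂).antisymm ?_
  simpa [angle_eq_zero_of_sameRay hx hy h] using angleSum_append_cons_cons_le l₁ x hy l₂

open Classical in
theorem angleSum_filter_append_add_cons_le (l₁ : List E) (x y : E) (l₂ : List E) :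
    angleSum ((l₁ ++ (x + y) :: l₂).filter (· ≠ 0)) ≤
      angleSum ((l₁ ++ x :: y :: l₂).filter (· ≠ 0)) := by
  by_cases hx : x = 0
  · simp [hx]
  by_cases hy : y = 0
  · simp [hx, hy]
  by_cases hxy : x + y = 0
  · exact angleSum_le_of_sublist (by simp [hx, hy, hxy])
  · simpa [hx, hy, hxy] using angleSum_append_add_cons_le _ x y _

open Classical in
theorem angleSum_filter_append_add_cons_of_sameRay (l₁ : List E) {x y : E} (h : SameRay ℝ x y)
    (l₂ : List E) :
    angleSum ((l₁ ++ (x + y) :: l₂).filter (· ≠ 0)) =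
      angleSum ((l₁ ++ x :: y :: l₂).filter (· ≠ 0)) := by
  by_cases hx : x = 0
  · simp [hx]
  by_cases hy : y = 0
  · simp [hx, hy]
  have hxy : x + y ≠ 0 := by
    intro hxy
    obtain rfl : y = -x := (neg_eq_of_add_eq_zero_right hxy).symm
    exact hx (eq_zero_of_sameRay_self_neg h)
  simpa [hx, hy, hxy] using angleSum_append_add_cons_of_sameRay _ hx hy h _

end AngleSum

section TotalCurvature

variable {E : Type*} [NormedAddCommGroup E] [InnerProductSpace ℝ E]

open Classical in
theorem turnSum_collapse_eq_angleSum (l : List E) :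
    turnSum (collapse l) = angleSum ((edgeVectors l).filter (· ≠ 0)) := by
  rw [turnSum_eq_angleSum_edgeVectors, edgeVectors_collapse]

theorem turnSum_collapse_le_of_edgeVectors_sublist {l₁ l₂ : List E}
    (h : (edgeVectors l₁).Sublist (edgeVectors l₂)) :
    turnSum (collapse l₁) ≤ turnSum (collapse l₂) := by
  rw [turnSum_collapse_eq_angleSum, turnSum_collapse_eq_angleSum]
  exact angleSum_le_of_sublist (h.filter _)

theorem turnSum_collapse_delete_le (l₁ : List E) (a b c : E) (l₂ : List E) :
    turnSum (collapse (l₁ ++ a :: c :: l₂)) ≤ turnSum (collapse (l₁ ++ a :: b :: c :: l₂)) := by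
  rw [turnSum_collapse_eq_angleSum, turnSum_collapse_eq_angleSum, edgeVectors_append_cons,
    edgeVectors, edgeVectors_append_cons_cons_cons, ← sub_add_sub_cancel' b a c]
  exact angleSum_filter_append_add_cons_le _ _ _ _

theorem turnSum_collapse_delete_eq_of_mem_segment (l₁ : List E) {a b c : E} (hb : b ∈ segment ℝ a c)
    (l₂ : List E) :
    turnSum (collapse (l₁ ++ a :: c :: l₂)) = turnSum (collapse (l₁ ++ a :: b :: c :: l₂)) := by
  rw [turnSum_collapse_eq_angleSum, turnSum_collapse_eq_angleSum, edgeVectors_append_cons,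
    edgeVectors, edgeVectors_append_cons_cons_cons, ← sub_add_sub_cancel' b a c]
  exact angleSum_filter_append_add_cons_of_sameRay _ (mem_segment_iff_sameRay.1 hb) _

theorem turnSum_collapse_append_le_append_cons (l₁ : List E) (b : E) (l₂ : List E) :
    turnSum (collapse (l₁ ++ l₂)) ≤ turnSum (collapse (l₁ ++ b :: l₂)) := by
  rcases l₁.eq_nil_or_concat' with rfl | ⟨l₁, a, rfl⟩
  · exact turnSum_collapse_le_of_edgeVectors_sublist (edgeVectors_sublist_cons b l₂)
  · cases l₂ with
    | nil =>
      rw [List.append_nil]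
      exact turnSum_collapse_le_of_edgeVectors_sublist (edgeVectors_sublist_concat _ b)
    | cons c l₂ => simpa using turnSum_collapse_delete_le l₁ a b c l₂

theorem turnSum_collapse_le_of_sublist {l₁ l₂ : List E} (h : l₁.Sublist l₂) :
    turnSum (collapse l₁) ≤ turnSum (collapse l₂) := by
  suffices ∀ p, turnSum (collapse (p ++ l₁)) ≤ turnSum (collapse (p ++ l₂)) from this []
  induction h with
  | slnil => exact fun p => le_rfl
  | cons a _ ih => exact fun p => (ih p).trans (turnSum_collapse_append_le_append_cons p a _)
  | cons_cons a _ ih => exact fun p => by simpa using ih (p ++ [a])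

theorem turnSum_collapse_eraseIdx_of_mem_segment (l : List E) {i : ℕ} (hi : i + 2 < l.length)
    (h : l[i + 1] ∈ segment ℝ l[i] l[i + 2]) :
    turnSum (collapse (l.eraseIdx (i + 1))) = turnSum (collapse l) := by
  have h_split : l = l.take i ++ l[i] :: l[i + 1] :: l[i + 2] :: l.drop (i + 3) := by simp
  have h_erase : l.eraseIdx (i + 1) = l.take i ++ l[i] :: l[i + 2] :: l.drop (i + 3) := by
    rw [List.eraseIdx_eq_take_drop_succ, List.take_succ_eq_append_getElem (by lia),
      List.drop_eq_getElem_cons hi, List.append_assoc, List.singleton_append]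
  rw [h_erase, turnSum_collapse_delete_eq_of_mem_segment _ h, ← h_split]

end TotalCurvature

theorem map_range_ite_lt_eq_eraseIdx {α : Type*} (v : ℕ → α) {n j : ℕ} (hj : j ≤ n) :
    ((List.range n).map fun i => if i < j then v i else v (i + 1)) =
      ((List.range (n + 1)).map v).eraseIdx j := by
  apply List.ext_getElem <;> grind

theorem tc_delete_vertex_general {E : Type*} [NormedAddCommGroup E] [InnerProductSpace ℝ E]
    {n j : ℕ} (hj0 : 0 < j) (hjn : j < n) (v : ℕ → E) :
    turnSum (collapse ((List.range n).map fun i => if i < j then v i else v (i + 1))) ≤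
      turnSum (collapse ((List.range (n + 1)).map v)) ∧
    (v j ∈ segment ℝ (v (j - 1)) (v (j + 1)) →
      turnSum (collapse ((List.range n).map fun i => if i < j then v i else v (i + 1))) =
        turnSum (collapse ((List.range (n + 1)).map v))) := by
  rw [map_range_ite_lt_eq_eraseIdx v hjn.le]
  refine ⟨turnSum_collapse_le_of_sublist (List.eraseIdx_sublist _ j), fun h => ?_⟩
  obtain ⟨i, rfl⟩ := Nat.exists_eq_add_of_lt hj0
  rw [zero_add] at h hjn ⊢
  exact turnSum_collapse_eraseIdx_of_mem_segment _ (by rw [List.length_map, List.length_range]; lia)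
    (by simpa using h)

/-- deleting one interior vertex `v j` (`0 < j < n`) from a polygon
`v 0, …, v n` in `ℝᵈ` with no two consecutive vertices equal does not increase the total
curvature; equality holds if `v (j-1), v j, v (j+1)` are collinear with `v j` on the
segment from `v (j-1)` to `v (j+1)`. -/
theorem tc_delete_vertex (d n j : ℕ) (hj0 : 0 < j) (hjn : j < n)
    (v : ℕ → EuclideanSpace ℝ (Fin d)) (hne : ∀ i < n, v i ≠ v (i + 1)) :
    turnSum (collapse ((List.range n).map fun i => if i < j then v i else v (i + 1))) ≤
      turnSum (collapse ((List.range (n + 1)).map v)) ∧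
    (v j ∈ segment ℝ (v (j - 1)) (v (j + 1)) →
      turnSum (collapse ((List.range n).map fun i => if i < j then v i else v (i + 1))) =
        turnSum (collapse ((List.range (n + 1)).map v))) :=
  tc_delete_vertex_general hj0 hjn v
end

section
/- (Fenchel's theorem) Every nonconstant closed curve γ : ℝ/ℤ → ℝ^d has total curvature TC(γ) ≥ 2π. -/
open Set Filter MeasureTheory
open scoped ENNReal NNReal RealInnerProductSpace

/-! Two points are enough to inscribe a closed polygon. If the curve takes distinct values `a` and
`b`, the digon from `a` to `b` and back reverses direction at both vertices, turning by `π` at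
each. -/

section Digon

variable {E : Type*}

theorem collapse_eq_self {l : List E} (hl : l.IsChain (· ≠ ·)) : collapse l = l :=
  @List.destutter_of_isChain E (· ≠ ·) (Classical.decRel _) l hl

theorem cyclicCollapse_eq_self {l : List E} (hl : l.IsChain (· ≠ ·))
    (hends : l.getLast? ≠ l.head?) : cyclicCollapse l = l := by
  rw [cyclicCollapse, collapse_eq_self hl, if_neg fun h ↦ hends h.2]

theorem cyclicCollapse_pair {a b : E} (hab : a ≠ b) : cyclicCollapse [a, b] = [a, b] :=
  cyclicCollapse_eq_self (List.isChain_pair.2 hab) (by simpa using hab.symm)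

theorem loopVertexList_one (γ : AddCircle (1 : ℝ) → E) (u : ℕ → ℝ) :
    loopVertexList γ 1 u = [γ (u 0 : ℝ), γ (u 1 : ℝ)] :=
  rfl

variable [NormedAddCommGroup E] [InnerProductSpace ℝ E]

theorem angle_sub_sub_eq_pi {a b : E} (hab : a ≠ b) :
    InnerProductGeometry.angle (b - a) (a - b) = Real.pi := by
  rw [← neg_sub b a]
  exact InnerProductGeometry.angle_self_neg_of_nonzero (sub_ne_zero.2 hab.symm)

theorem turnSum_digon {a b : E} (hab : a ≠ b) : turnSum [a, b, a, b] = 2 * Real.pi := by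
  simp only [turnSum, angle_sub_sub_eq_pi hab, angle_sub_sub_eq_pi hab.symm]
  ring

theorem loopPolyTC_digon {γ : AddCircle (1 : ℝ) → E} {u : ℕ → ℝ}
    (hne : γ (u 0 : ℝ) ≠ γ (u 1 : ℝ)) : loopPolyTC γ 1 u = 2 * Real.pi := by
  rw [loopPolyTC, loopVertexList_one, cyclicCollapse_pair hne]
  exact turnSum_digon hne

end Digon

theorem ofReal_loopPolyTC_le_loopTC {E : Type*} [NormedAddCommGroup E] [InnerProductSpace ℝ E]
    (γ : AddCircle (1 : ℝ) → E) {m : ℕ} {u : ℕ → ℝ} (hu : LoopInscribed m u) :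
    ENNReal.ofReal (loopPolyTC γ m u) ≤ loopTC γ :=
  le_iSup_of_le m (le_iSup₂_of_le u hu le_rfl)

theorem exists_lt_mem_Ico_apply_ne {p : ℝ} [Fact (0 < p)] {α : Type*} {γ : AddCircle p → α}
    (hγ : ∃ s t, γ s ≠ γ t) (a : ℝ) :
    ∃ x ∈ Ico a (a + p), ∃ y ∈ Ico a (a + p), x < y ∧ γ x ≠ γ y := by
  obtain ⟨s, t, hst⟩ := hγ
  obtain ⟨x, hx, rfl⟩ := (AddCircle.coe_image_Ico_eq p a).ge (mem_univ s)
  obtain ⟨y, hy, rfl⟩ := (AddCircle.coe_image_Ico_eq p a).ge (mem_univ t)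
  have hxy : x ≠ y := fun h ↦ hst (by rw [h])
  rcases hxy.lt_or_gt with hlt | hgt
  · exact ⟨x, hx, y, hy, hlt, hst⟩
  · exact ⟨y, hy, x, hx, hgt, hst.symm⟩

theorem loopInscribed_one_iff {u : ℕ → ℝ} :
    LoopInscribed 1 u ↔ u 0 < u 1 ∧ u 0 ∈ Ico (0 : ℝ) 1 ∧ u 1 ∈ Ico (0 : ℝ) 1 := by
  simp [LoopInscribed, Nat.le_one_iff_eq_zero_or_eq_one]

theorem exists_loopInscribed_one_apply_ne {α : Type*} {γ : AddCircle (1 : ℝ) → α}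
    (hγ : ∃ s t, γ s ≠ γ t) :
    ∃ u : ℕ → ℝ, LoopInscribed 1 u ∧ γ (u 0 : ℝ) ≠ γ (u 1 : ℝ) := by
  obtain ⟨x, hx, y, hy, hxy, hne⟩ := exists_lt_mem_Ico_apply_ne hγ 0
  rw [zero_add] at hx hy
  exact ⟨fun i ↦ if i = 0 then x else y, loopInscribed_one_iff.2 ⟨hxy, hx, hy⟩, hne⟩

theorem fenchel_general {E : Type*} [NormedAddCommGroup E] [InnerProductSpace ℝ E]
    (γ : AddCircle (1 : ℝ) → E) (hγ : ∃ s t, γ s ≠ γ t) :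
    ENNReal.ofReal (2 * Real.pi) ≤ loopTC γ := by
  obtain ⟨u, hu, hne⟩ := exists_loopInscribed_one_apply_ne hγ
  rw [← loopPolyTC_digon hne]
  exact ofReal_loopPolyTC_le_loopTC γ hu

/-- Fenchel's theorem: every nonconstant closed curve `γ : ℝ/ℤ → ℝᵈ` has
total curvature at least `2π`. -/
theorem fenchel (d : ℕ) (γ : AddCircle (1 : ℝ) → EuclideanSpace ℝ (Fin d))
    (hγ : Continuous γ) (hnc : ∃ s t, γ s ≠ γ t) :
    ENNReal.ofReal (2 * Real.pi) ≤ loopTC γ :=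
  fenchel_general γ hnc
end

section
/- (Fáry's averaged-projection formula) Let γ : I → ℝ^d be a continuous curve, let 1 ≤ k < d, let π_k : ℝ^d → ℝ^k denote the orthogonal projection onto the first k coordinates, and let μ be the Haar probability measure on the orthogonal group O(d). Then TC(γ) = ∫_{O(d)} TC(π_k ∘ g ∘ γ) dμ(g), as an identity in [0,∞]. In words: the total curvature of γ equals the average total curvature of its orthogonal projections to k-planes. -/
open Set Filter MeasureTheory
open scoped ENNReal NNReal RealInnerProductSpace

instance (d : ℕ) : MeasurableSpace (Matrix (Fin d) (Fin d) ℝ) :=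
  inferInstanceAs (MeasurableSpace (Fin d → Fin d → ℝ))

/-!
Fix a nonzero linear map `P` and let `g` be a Haar-random orthogonal matrix. The law of the random
linear map `A = P ∘ g` is invariant under composition with isometries, and `A v ≠ 0` almost surely
for each fixed `v ≠ 0`. Hence the mean angle between `A v` and `A w` depends only on the angle `θ`
between `v` and `w`. As `θ` grows along a great circle, the image under `A` runs along an ellipse
around the origin, where angles add up; so the mean angle is an additive function of `θ ∈ [0, π]`.
It is nonnegative and takes the value `π` at `π`, so it is equal to `θ`. Summing over the vertices,
the mean total curvature of the image of a polygon is the total curvature of the polygon.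

Refining a polygon does not decrease its total curvature, so the total curvature of a curve is a
directed supremum over its inscribed polygons. The terms are lower semicontinuous in `A`, so this
supremum commutes with the integral although it is uncountable, whether or not the curve is
continuous.
-/

open InnerProductGeometry

section Turning

variable {E : Type*} [NormedAddCommGroup E] [InnerProductSpace ℝ E] {v a b : E}

open Classical in
/-- The angle by which a polygon turns from an edge vector `u` to the next edge vector `v`, where
`u = 0` stands for the absence of a previous edge and produces no turning. -/
noncomputable def turnAngle (u v : E) : ℝ := if u = 0 then 0 else angle u v

@[simp]
lemma turnAngle_zero_left (v : E) : turnAngle 0 v = 0 := if_pos rfl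

lemma turnAngle_of_ne_zero (hu : u ≠ 0) (v : E) : turnAngle u v = angle u v := if_neg hu

lemma turnAngle_nonneg (u v : E) : 0 ≤ turnAngle u v := by
  unfold turnAngle
  split_ifs
  exacts [le_rfl, angle_nonneg u v]

lemma turnAngle_le_turnAngle_add_angle (u v w : E) :
    turnAngle u w ≤ turnAngle u v + angle v w := by
  unfold turnAngle
  split_ifs
  exacts [(angle_nonneg v w).trans_eq (zero_add _).symm, angle_le_angle_add_angle u v w]

open Classical in
/-- The total turning of a polygon that is continued from its current vertex `a`, reached along
the edge vector `u` (`0` at the first vertex), through the vertices in a list. Repeated vertices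
are skipped. -/
noncomputable def turningFrom : E → E → List E → ℝ
  | _, _, [] => 0
  | u, a, b :: l =>
    if b = a then turningFrom u a l else turnAngle u (b - a) + turningFrom (b - a) b l

@[simp]
lemma turningFrom_nil (u a : E) : turningFrom u a [] = 0 := rfl

@[simp]
lemma turningFrom_cons_self (u a : E) (l : List E) :
    turningFrom u a (a :: l) = turningFrom u a l := if_pos rfl

lemma turningFrom_cons_of_ne (h : b ≠ a) (u : E) (l : List E) :
    turningFrom u a (b :: l) = turnAngle u (b - a) + turningFrom (b - a) b l := if_neg h

lemma turningFrom_nonneg (u a : E) (l : List E) : 0 ≤ turningFrom u a l := by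
  induction l generalizing u a with
  | nil => exact le_rfl
  | cons b l ih =>
    unfold turningFrom
    split_ifs
    exacts [ih u a, add_nonneg (turnAngle_nonneg _ _) (ih _ _)]

lemma turningFrom_le_turnAngle_add (hv : v ≠ 0) (u a : E) (l : List E) :
    turningFrom u a l ≤ turnAngle u v + turningFrom v a l := by
  induction l with
  | nil => simpa using turnAngle_nonneg u v
  | cons b l ih =>
    obtain rfl | h := eq_or_ne b a
    · simpa using ih
    · rw [turningFrom_cons_of_ne h, turningFrom_cons_of_ne h, turnAngle_of_ne_zero hv, ← add_assoc]
      gcongr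
      exact turnAngle_le_turnAngle_add_angle u v (b - a)

/-- The triangle inequality on the sphere: cutting off the corner `x` replaces the directions
`x - a`, `b - x` by `b - a`, which lies on the arc between them. -/
lemma turningFrom_le_cons (u a x : E) (l : List E) :
    turningFrom u a l ≤ turningFrom u a (x :: l) := by
  obtain rfl | hx := eq_or_ne x a
  · simp
  have hxa : x - a ≠ 0 := sub_ne_zero.2 hx
  rw [turningFrom_cons_of_ne hx]
  cases l with
  | nil => simpa using turnAngle_nonneg u (x - a)
  | cons b l =>
    obtain rfl | hbx := eq_or_ne b x
    · rw [turningFrom_cons_of_ne hx, turningFrom_cons_self]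
    have hbx' : b - x ≠ 0 := sub_ne_zero.2 hbx
    rw [turningFrom_cons_of_ne hbx, turnAngle_of_ne_zero hxa]
    obtain rfl | hba := eq_or_ne b a
    · rw [turningFrom_cons_self]
      linarith [turningFrom_le_turnAngle_add hbx' u b l,
        turnAngle_le_turnAngle_add_angle u (x - b) (b - x)]
    · have hab : b - a ≠ 0 := sub_ne_zero.2 hba
      have hsplit : angle (x - a) (b - x) = angle (x - a) (b - a) + angle (b - a) (b - x) := by
        have h := angle_eq_angle_add_add_angle_add (x - a) hbx'
        rwa [show x - a + (b - x) = b - a by abel, angle_comm (b - x)] at h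
      have hback := turningFrom_le_turnAngle_add hbx' (b - a) b l
      rw [turnAngle_of_ne_zero hab] at hback
      rw [turningFrom_cons_of_ne hba]
      linarith [turnAngle_le_turnAngle_add_angle u (x - a) (b - a)]

lemma turningFrom_le_of_sublist {l l' : List E} (h : l.Sublist l') (u a : E) :
    turningFrom u a l ≤ turningFrom u a l' := by
  induction h generalizing u a with
  | slnil => exact le_rfl
  | cons x _ ih => exact (ih u a).trans (turningFrom_le_cons u a x _)
  | cons_cons x _ ih =>
    unfold turningFrom
    split_ifs
    exacts [ih u a, add_le_add_right (ih (x - a) x) _]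

/-- The total turning of the polygon with the given list of vertices, that is, its total
curvature. Unlike for `turnSum`, consecutive vertices may coincide. -/
noncomputable def turning : List E → ℝ
  | [] => 0
  | a :: l => turningFrom 0 a l

lemma turning_le_cons (x : E) (l : List E) : turning l ≤ turning (x :: l) := by
  cases l with
  | nil => exact turningFrom_nonneg 0 x []
  | cons b l =>
    obtain rfl | h := eq_or_ne b x
    · simp [turning]
    · simpa [turning, turningFrom_cons_of_ne h] using
        turningFrom_le_turnAngle_add (sub_ne_zero.2 h) 0 b l

lemma turning_le_of_sublist {l l' : List E} (h : l.Sublist l') : turning l ≤ turning l' := by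
  induction h with
  | slnil => exact le_rfl
  | cons x _ ih => exact ih.trans (turning_le_cons x _)
  | cons_cons x h _ => exact turningFrom_le_of_sublist h 0 x

end Turning

section Collapse

lemma exists_destutter'_eq_cons {α : Type*} (R : α → α → Prop) [DecidableRel R] (a : α)
    (l : List α) : ∃ t, List.destutter' R a l = a :: t := by
  induction l with
  | nil => exact ⟨[], List.destutter'_nil R⟩
  | cons b l ih =>
    rw [List.destutter'_cons]
    split_ifs
    exacts [⟨_, rfl⟩, ih]

variable {E : Type*} [NormedAddCommGroup E] [InnerProductSpace ℝ E]

lemma turnSum_cons_destutter' [DecidableRel fun x y : E => x ≠ y] {c a : E} (h : a ≠ c)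
    (l : List E) :
    turnSum (c :: List.destutter' (· ≠ ·) a l) = turningFrom (a - c) a l := by
  induction l generalizing c a with
  | nil => simp [turnSum]
  | cons b l ih =>
    obtain rfl | hba := eq_or_ne b a
    · rw [List.destutter'_cons_neg _ (not_not.2 rfl), turningFrom_cons_self, ih h]
    · rw [List.destutter'_cons_pos _ hba.symm, turningFrom_cons_of_ne hba,
        turnAngle_of_ne_zero (sub_ne_zero.2 h), ← ih hba]
      obtain ⟨t, ht⟩ := exists_destutter'_eq_cons (fun x y : E => x ≠ y) b l
      rw [ht, turnSum]

lemma turnSum_destutter' [DecidableRel fun x y : E => x ≠ y] (a : E) (l : List E) :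
    turnSum (List.destutter' (· ≠ ·) a l) = turningFrom 0 a l := by
  induction l with
  | nil => simp [turnSum]
  | cons b l ih =>
    obtain rfl | hba := eq_or_ne b a
    · rw [List.destutter'_cons_neg _ (not_not.2 rfl), turningFrom_cons_self, ih]
    · rw [List.destutter'_cons_pos _ hba.symm, turningFrom_cons_of_ne hba,
        turnAngle_zero_left, zero_add, turnSum_cons_destutter' hba]

lemma turnSum_collapse (l : List E) : turnSum (collapse l) = turning l := by
  cases l
  exacts [rfl, @turnSum_destutter' _ _ _ (Classical.decRel _) _ _]

end Collapse

section Semicontinuity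

variable {E X α : Type*} [NormedAddCommGroup E] [InnerProductSpace ℝ E] [TopologicalSpace X]
  {u a : X → E} {c : X → α → E} {x₀ : X}

lemma lowerSemicontinuousAt_turnAngle {v : X → E} (hu : ContinuousAt u x₀)
    (hv : ContinuousAt v x₀) (hv₀ : v x₀ ≠ 0) :
    LowerSemicontinuousAt (fun x => turnAngle (u x) (v x)) x₀ := by
  obtain hu₀ | hu₀ := eq_or_ne (u x₀) 0
  · intro y (hy : y < turnAngle (u x₀) (v x₀))
    rw [hu₀, turnAngle_zero_left] at hy
    exact .of_forall fun x => hy.trans_le (turnAngle_nonneg _ _)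
  · have hangle : ContinuousAt (fun x => angle (u x) (v x)) x₀ :=
      (continuousAt_angle hu₀ hv₀).comp₂ hu hv
    refine (hangle.congr ?_).lowerSemicontinuousAt
    filter_upwards [hu.eventually_ne hu₀] with x hx
    exact (turnAngle_of_ne_zero hx _).symm

/-- Where neighbouring vertices merge in the limit, turning can only be lost, by
`turningFrom_le_cons`; everywhere else it is continuous. -/
lemma lowerSemicontinuousAt_turningFrom (hu : ContinuousAt u x₀) (ha : ContinuousAt a x₀)
    (hc : ∀ i, ContinuousAt (c · i) x₀) (l : List α) :
    LowerSemicontinuousAt (fun x => turningFrom (u x) (a x) (l.map (c x))) x₀ := by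
  induction l generalizing u a with
  | nil => exact continuousAt_const.lowerSemicontinuousAt
  | cons i l ih =>
    simp only [List.map_cons]
    obtain h | h := eq_or_ne (c x₀ i) (a x₀)
    · intro y (hy : y < turningFrom (u x₀) (a x₀) (c x₀ i :: l.map (c x₀)))
      rw [h, turningFrom_cons_self] at hy
      filter_upwards [ih hu ha y hy] with x hx
      exact hx.trans_le (turningFrom_le_cons _ _ _ _)
    · have hsub : ContinuousAt (fun x => c x i - a x) x₀ := (hc i).sub ha
      have hsum := (lowerSemicontinuousAt_turnAngle hu hsub (sub_ne_zero.2 h)).add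
        (ih hsub (hc i))
      intro y (hy : y < turningFrom (u x₀) (a x₀) (c x₀ i :: l.map (c x₀)))
      rw [turningFrom_cons_of_ne h] at hy
      filter_upwards [hsum y hy, hsub.eventually_ne (sub_ne_zero.2 h)] with x hx hne
      rwa [turningFrom_cons_of_ne (sub_ne_zero.1 hne)]

lemma lowerSemicontinuous_turning (hc : ∀ i, Continuous (c · i)) (l : List α) :
    LowerSemicontinuous fun x => turning (l.map (c x)) := by
  cases l with
  | nil => exact continuous_const.lowerSemicontinuous
  | cons i l =>
    exact fun x => lowerSemicontinuousAt_turningFrom continuousAt_const (hc i).continuousAt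
      (fun j => (hc j).continuousAt) l

lemma lowerSemicontinuous_ofReal_turning (hc : ∀ i, Continuous (c · i)) (l : List α) :
    LowerSemicontinuous fun x => ENNReal.ofReal (turning (l.map (c x))) :=
  ENNReal.continuous_ofReal.comp_lowerSemicontinuous (lowerSemicontinuous_turning hc l)
    fun _ _ => ENNReal.ofReal_le_ofReal

end Semicontinuity

section TotalCurvature

variable {ι E : Type*} [LinearOrder ι] [NormedAddCommGroup E] [InnerProductSpace ℝ E]

/-- The total turning of the polygon inscribed in `γ` whose parameters are the elements of `s`. -/
noncomputable def inscribedTurning (γ : ι → E) (s : Finset ι) : ℝ :=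
  turning ((s.sort (· ≤ ·)).map γ)

lemma monotone_inscribedTurning (γ : ι → E) : Monotone (inscribedTurning γ) := fun s t hst =>
  turning_le_of_sublist <| .map γ <| List.sublist_of_subperm_of_sortedLE
    (s.sort_nodup _ |>.subperm fun i hi => by simpa using hst (by simpa using hi))
    s.sortedLT_sort.sortedLE t.sortedLT_sort.sortedLE

/-- The total curvature of a curve whose parameters range over an arbitrary linear order: the
supremum of the total turnings of its inscribed polygons. -/
noncomputable def totalCurvature (γ : ι → E) : ℝ≥0∞ :=
  ⨆ s : Finset ι, ENNReal.ofReal (inscribedTurning γ s)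

lemma inscribedTurning_toFinset (γ : ι → E) {l : List ι} (hl : l.SortedLT) :
    inscribedTurning γ l.toFinset = turning (l.map γ) := by
  rw [inscribedTurning, (List.toFinset_sort (· ≤ ·) hl.nodup).2 hl.sortedLE.pairwise]

lemma lowerSemicontinuous_totalCurvature {X : Type*} [TopologicalSpace X] {c : X → ι → E}
    (hc : ∀ i, Continuous (c · i)) : LowerSemicontinuous fun x => totalCurvature (c x) :=
  lowerSemicontinuous_iSup fun _ => lowerSemicontinuous_ofReal_turning hc _

lemma ofReal_turning_le_totalCurvature (γ : ι → E) {l : List ι} (hl : l.SortedLT) :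
    ENNReal.ofReal (turning (l.map γ)) ≤ totalCurvature γ := by
  rw [← inscribedTurning_toFinset γ hl]
  exact le_iSup (fun s => ENNReal.ofReal (inscribedTurning γ s)) l.toFinset

lemma ofReal_turning_le_arcTC (γ : ℝ → E) {a b : ℝ} {l : List ℝ} (hl : l.SortedLT)
    (hmem : ∀ t ∈ l, t ∈ Icc a b) : ENNReal.ofReal (turning (l.map γ)) ≤ arcTC γ a b := by
  obtain rfl | hne := eq_or_ne l []
  · simp [turning]
  have hlen : l.length - 1 + 1 = l.length := Nat.sub_add_cancel (List.length_pos_of_ne_nil hne)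
  have hu : InscribedIn a b (l.length - 1) (l.getD · a) := by
    refine ⟨fun i hi => ?_, fun i hi => ?_⟩
    · change l.getD i a < l.getD (i + 1) a
      rw [List.getD_eq_getElem _ _ (by lia), List.getD_eq_getElem _ _ (by lia)]
      exact hl.getElem_lt_getElem_of_lt i.lt_succ_self
    · change l.getD i a ∈ Icc a b
      rw [List.getD_eq_getElem _ _ (by lia)]
      exact hmem _ (List.getElem_mem _)
  have hmap : vertexList γ (l.length - 1) (l.getD · a) = l.map γ := by
    refine List.ext_getElem (by simp [vertexList, hlen]) fun i _ hi => ?_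
    rw [List.length_map] at hi
    simp [vertexList, hi]
  rw [← hmap, ← turnSum_collapse]
  exact le_iSup₂_of_le _ _ (le_iSup (fun _ : InscribedIn a b _ _ => _) hu)

lemma arcTC_eq_totalCurvature (γ : ℝ → E) (a b : ℝ) :
    arcTC γ a b = totalCurvature fun t : Icc a b => γ t := by
  refine le_antisymm (iSup_le fun m => iSup₂_le fun u hu => ?_) (iSup_le fun s => ?_)
  · have hmono : StrictMono fun i : Fin (m + 1) => (⟨u i, hu.2 i i.is_le⟩ : Icc a b) :=
      Fin.strictMono_iff_lt_succ.2 fun i => hu.1 i i.2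
    have hmap : vertexList γ m u = (List.ofFn fun i : Fin (m + 1) =>
        (⟨u i, hu.2 i i.is_le⟩ : Icc a b)).map fun t : Icc a b => γ t :=
      List.ext_getElem (by simp [vertexList]) fun i _ _ => by
        simp [vertexList, -List.ofFn_succ]
    rw [polyTC, turnSum_collapse, hmap]
    exact ofReal_turning_le_totalCurvature _ hmono.sortedLT_ofFn
  · have hsorted : ((s.sort (· ≤ ·)).map ((↑) : Icc a b → ℝ)).SortedLT :=
      (Subtype.strictMono_coe _).sortedLT_listMap.2 s.sortedLT_sort
    have hle := ofReal_turning_le_arcTC γ hsorted fun t ht => by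
      obtain ⟨t, -, rfl⟩ := List.mem_map.1 ht
      exact t.2
    rwa [List.map_map] at hle

end TotalCurvature

section AdditiveFunctions

variable {φ : ℝ → ℝ} {p x : ℝ}

/-- Doubling modulo `p` doubles `φ`, which is bounded, so `φ` vanishes. -/
lemma eq_zero_of_additive_of_bounded {C : ℝ}
    (hadd : ∀ a b, 0 ≤ a → 0 ≤ b → a + b ≤ p → φ (a + b) = φ a + φ b) (hp : φ p = 0)
    (hC : ∀ x ∈ Icc 0 p, |φ x| ≤ C) (hx : x ∈ Icc 0 p) : φ x = 0 := by
  have hdouble : ∀ x ∈ Icc 0 p, ∃ y ∈ Icc 0 p, φ y = 2 * φ x := by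
    rintro x ⟨h0, hxp⟩
    obtain h | h := le_total (2 * x) p
    · refine ⟨2 * x, ⟨by linarith, h⟩, ?_⟩
      rw [two_mul, hadd x x h0 h0 (by linarith), two_mul]
    · refine ⟨2 * x - p, ⟨by linarith, by linarith⟩, ?_⟩
      have h₁ := hadd x (p - x) h0 (by linarith) (by linarith)
      have h₂ := hadd (2 * x - p) (p - x) (by linarith) (by linarith) (by linarith)
      rw [add_sub_cancel, hp] at h₁
      rw [show 2 * x - p + (p - x) = x by ring] at h₂
      linarith
  have hpow : ∀ n : ℕ, ∀ x ∈ Icc 0 p, 2 ^ n * |φ x| ≤ C := by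
    intro n
    induction n with
    | zero => simpa using hC
    | succ n ih =>
      intro x hx
      obtain ⟨y, hy, hφ⟩ := hdouble x hx
      calc 2 ^ (n + 1) * |φ x| = 2 ^ n * |φ y| := by rw [hφ, abs_mul, abs_two]; ring
        _ ≤ C := ih y hy
  by_contra hne
  obtain ⟨n, hn⟩ := pow_unbounded_of_one_lt (C / |φ x|) one_lt_two
  rw [div_lt_iff₀ (abs_pos.2 hne)] at hn
  exact hn.not_ge (hpow n x hx)

lemma mul_eq_mul_of_additive_of_nonneg (hnonneg : ∀ x ∈ Icc 0 p, 0 ≤ φ x)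
    (hadd : ∀ a b, 0 ≤ a → 0 ≤ b → a + b ≤ p → φ (a + b) = φ a + φ b) (hx : x ∈ Icc 0 p) :
    p * φ x = x * φ p := by
  have hp : 0 ≤ p := hx.1.trans hx.2
  have hle : ∀ x ∈ Icc 0 p, φ x ≤ φ p := fun x ⟨h0, hxp⟩ => by
    have h := hadd x (p - x) h0 (by linarith) (by linarith)
    rw [add_sub_cancel] at h
    linarith [hnonneg (p - x) ⟨by linarith, by linarith⟩]
  refine sub_eq_zero.1 <| eq_zero_of_additive_of_bounded (φ := fun x => p * φ x - x * φ p)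
    (C := p * φ p) (fun a b ha hb hab => ?_) (sub_self _) (fun x hx => ?_) hx
  · rw [hadd a b ha hb hab]
    ring
  · have hφp := hnonneg p ⟨hp, le_rfl⟩
    rw [abs_le]
    constructor
    · nlinarith [mul_le_mul_of_nonneg_right hx.2 hφp, mul_nonneg hp (hnonneg x hx)]
    · nlinarith [mul_le_mul_of_nonneg_left (hle x hx) hp, mul_nonneg hx.1 hφp]

end AdditiveFunctions

section DirectedSupremum

variable {X ι : Type*} [TopologicalSpace X] [SecondCountableTopology X] [MeasurableSpace X]
  [OpensMeasurableSpace X] {f : ι → X → ℝ≥0∞}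

/-- By Lindelöf, countably many `f i` have the same supremum. -/
lemma lintegral_iSup_of_lowerSemicontinuous (μ : Measure X)
    (hf : ∀ i, LowerSemicontinuous (f i)) (hdir : Directed (· ≤ ·) f) :
    ∫⁻ x, ⨆ i, f i x ∂μ = ⨆ i, ∫⁻ x, f i x ∂μ := by
  classical
  obtain h | h := isEmpty_or_nonempty ι
  · simp
  refine le_antisymm ?_ (iSup_le fun i => lintegral_mono fun x => le_iSup (f · x) i)
  obtain ⟨S, hSf, hcount, hS⟩ := exists_countable_lowerSemicontinuous_isLUB
    (by rintro _ ⟨i, rfl⟩; exact hf i) (isLUB_iSup (f := f))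
  have := hcount.to_subtype
  choose i hi using fun s : S => hSf s.2
  have hsup : ⨆ j, f j = ⨆ s, f (i s) := by
    simp_rw [hi, ← sSup_eq_iSup', hS.sSup_eq]
  have hfi : ∀ s, LowerSemicontinuous (f (i s)) := fun s => hf (i s)
  calc ∫⁻ x, ⨆ i, f i x ∂μ = ∫⁻ x, ⨆ t : Finset S, ⨆ s ∈ t, f (i s) x ∂μ := by
        refine lintegral_congr fun x => ?_
        rw [← iSup_eq_iSup_finset, ← iSup_apply, ← iSup_apply, hsup]
    _ = ⨆ t : Finset S, ∫⁻ x, ⨆ s ∈ t, f (i s) x ∂μ :=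
        lintegral_iSup_directed (fun t => (lowerSemicontinuous_biSup
          fun s _ => hfi s).measurable.aemeasurable) <|
          Monotone.directed_le fun t t' htt' x => biSup_mono htt'
    _ ≤ ⨆ i, ∫⁻ x, f i x ∂μ := iSup_le fun t => by
        obtain ⟨j, hj⟩ := hdir.finset_le (t.image i)
        exact le_iSup_of_le j <| lintegral_mono fun x =>
          iSup₂_le fun s hs => hj _ (Finset.mem_image_of_mem i hs) x

end DirectedSupremum

section Ellipse

variable {E F : Type*} [NormedAddCommGroup E] [InnerProductSpace ℝ E]
  [NormedAddCommGroup F] [InnerProductSpace ℝ F] {e f : E} {a b : ℝ}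

/-- The point of parameter `θ` on the (possibly degenerate) ellipse with conjugate
semi-diameters `e` and `f`; it is a unit circle if `e` and `f` are orthonormal. -/
noncomputable def ellipsePoint (e f : E) (θ : ℝ) : E := Real.cos θ • e + Real.sin θ • f

@[simp]
lemma ellipsePoint_zero (e f : E) : ellipsePoint e f 0 = e := by simp [ellipsePoint]

lemma map_ellipsePoint (A : E →L[ℝ] F) (e f : E) (θ : ℝ) :
    A (ellipsePoint e f θ) = ellipsePoint (A e) (A f) θ := by
  simp [ellipsePoint]

lemma ellipsePoint_add_pi (e f : E) (θ : ℝ) :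
    ellipsePoint e f (θ + Real.pi) = -ellipsePoint e f θ := by
  simp only [ellipsePoint, Real.cos_add_pi, Real.sin_add_pi]
  module

lemma sin_add_smul_ellipsePoint (e f : E) (a b : ℝ) :
    Real.sin (a + b) • ellipsePoint e f a =
      Real.sin b • e + Real.sin a • ellipsePoint e f (a + b) := by
  simp only [ellipsePoint, Real.sin_add, Real.cos_add]
  match_scalars
  · linear_combination Real.sin b * Real.sin_sq_add_cos_sq a
  · ring

lemma angle_ellipsePoint_add (ha : 0 ≤ a) (hb : 0 ≤ b) (hab : a + b ≤ Real.pi) (he : e ≠ 0)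
    (hea : ellipsePoint e f a ≠ 0) :
    angle e (ellipsePoint e f (a + b)) =
      angle e (ellipsePoint e f a) + angle (ellipsePoint e f a) (ellipsePoint e f (a + b)) := by
  obtain hπ | hπ := hab.eq_or_lt
  · rw [hπ, ← zero_add Real.pi, ellipsePoint_add_pi, ellipsePoint_zero, angle_neg_right,
      angle_neg_right, angle_self he, angle_comm (ellipsePoint e f a)]
    ring
  obtain h₀ | h₀ := (add_nonneg ha hb).eq_or_lt
  · obtain ⟨rfl, rfl⟩ := (add_eq_zero_iff_of_nonneg ha hb).1 h₀.symm
    simp [angle_self he]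
  have hsin : 0 < Real.sin (a + b) := Real.sin_pos_of_pos_of_lt_pi h₀ hπ
  have hcoeff : ∀ t, 0 ≤ t → t ≤ a + b → 0 ≤ Real.sin t / Real.sin (a + b) := fun t h0 ht =>
    div_nonneg (Real.sin_nonneg_of_nonneg_of_le_pi h0 (ht.trans hab)) hsin.le
  refine angle_eq_angle_add_add_angle_add_of_mem_span hea (Submodule.mem_span_pair.2
    ⟨⟨_, hcoeff b hb (by linarith)⟩, ⟨_, hcoeff a ha (by linarith)⟩, ?_⟩)
  change (Real.sin b / Real.sin (a + b)) • e +
    (Real.sin a / Real.sin (a + b)) • ellipsePoint e f (a + b) = ellipsePoint e f a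
  rw [div_eq_inv_mul, div_eq_inv_mul, mul_smul, mul_smul, ← smul_add,
    ← sin_add_smul_ellipsePoint, inv_smul_smul₀ hsin.ne']

lemma inner_ellipsePoint (he : ‖e‖ = 1) (hf : ‖f‖ = 1) (hef : ⟪e, f⟫ = 0) (a b : ℝ) :
    ⟪ellipsePoint e f a, ellipsePoint e f b⟫ = Real.cos (a - b) := by
  have hfe : ⟪f, e⟫ = 0 := by rw [real_inner_comm, hef]
  simp only [ellipsePoint, inner_add_left, inner_add_right, real_inner_smul_left,
    real_inner_smul_right, hef, hfe, real_inner_self_eq_norm_sq, he, hf, Real.cos_sub]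
  ring

lemma norm_ellipsePoint (he : ‖e‖ = 1) (hf : ‖f‖ = 1) (hef : ⟪e, f⟫ = 0) (θ : ℝ) :
    ‖ellipsePoint e f θ‖ = 1 := by
  have h := inner_ellipsePoint he hf hef θ θ
  rwa [sub_self, Real.cos_zero, real_inner_self_eq_norm_sq,
    pow_eq_one_iff_of_nonneg (norm_nonneg _) two_ne_zero] at h

lemma reflection_ellipsePoint (he : ‖e‖ = 1) (hf : ‖f‖ = 1) (hef : ⟪e, f⟫ = 0) (a θ : ℝ) :
    (ℝ ∙ ellipsePoint e f (a / 2)).reflection (ellipsePoint e f θ) = ellipsePoint e f (a - θ) := by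
  rw [Submodule.reflection_singleton_apply, inner_ellipsePoint he hf hef,
    norm_ellipsePoint he hf hef]
  have hcos := Real.two_mul_cos_mul_cos (a / 2) (a / 2 - θ)
  have hsin := Real.two_mul_sin_mul_cos (a / 2) (a / 2 - θ)
  rw [sub_sub_cancel, show a / 2 + (a / 2 - θ) = a - θ by ring] at hcos hsin
  simp only [ellipsePoint]
  match_scalars
  · simp only [one_pow, div_one, mul_one]
    linear_combination hcos
  · simp only [one_pow, div_one, mul_one]
    linear_combination hsin

/-- Gram–Schmidt in the plane of `v` and `w`. -/
lemma exists_orthonormal_ellipsePoint {v w : E} (hv : v ≠ 0) (hw : w ≠ 0)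
    (h : Real.sin (angle v w) ≠ 0) :
    ∃ e f : E, ‖e‖ = 1 ∧ ‖f‖ = 1 ∧ ⟪e, f⟫ = 0 ∧ v = ‖v‖ • e ∧
      w = ‖w‖ • ellipsePoint e f (angle v w) := by
  have hv' : ‖v‖ ≠ 0 := norm_ne_zero_iff.2 hv
  have hw' : ‖w‖ ≠ 0 := norm_ne_zero_iff.2 hw
  set θ := angle v w
  set e : E := ‖v‖⁻¹ • v
  set w₁ : E := ‖w‖⁻¹ • w
  have he : ‖e‖ = 1 := norm_smul_inv_norm hv
  have hw₁ : ‖w₁‖ = 1 := norm_smul_inv_norm hw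
  have hew : ⟪e, w₁⟫ = Real.cos θ := by
    rw [cos_angle, real_inner_smul_left, real_inner_smul_right]
    field_simp
  set x : E := w₁ - Real.cos θ • e with hx
  have hex : ⟪e, x⟫ = 0 := by
    rw [hx, inner_sub_right, hew, real_inner_smul_right, real_inner_self_eq_norm_sq, he]
    ring
  have hnorm : ‖x‖ = |Real.sin θ| := by
    rw [← sq_eq_sq₀ (norm_nonneg x) (abs_nonneg _), sq_abs, hx, norm_sub_sq_real,
      real_inner_smul_right, real_inner_comm, hew, hw₁, norm_smul, he, Real.norm_eq_abs, mul_one,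
      sq_abs]
    linear_combination -Real.sin_sq_add_cos_sq θ
  refine ⟨e, (Real.sin θ)⁻¹ • x, he, ?_, ?_, (smul_inv_smul₀ hv' v).symm, ?_⟩
  · rw [norm_smul, hnorm, norm_inv, Real.norm_eq_abs, inv_mul_cancel₀ (abs_ne_zero.2 h)]
  · rw [real_inner_smul_right, hex, mul_zero]
  · rw [ellipsePoint, smul_inv_smul₀ h, hx, add_sub_cancel, smul_inv_smul₀ hw']

end Ellipse

section RandomLinearMap

variable {E F : Type*} [NormedAddCommGroup E] [InnerProductSpace ℝ E]
  [NormedAddCommGroup F] [InnerProductSpace ℝ F]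

/-- The distribution `ν` of a random linear map `A : E → F` is isometry invariant if `A` and
`A ∘ L` have the same distribution for every linear isometry `L` of `E`. -/
def IsIsometryInvariant (ν : Measure (E →L[ℝ] F)) : Prop :=
  ∀ L : E ≃ₗᵢ[ℝ] E, MeasurePreserving (fun A : E →L[ℝ] F => A ∘L (L : E →L[ℝ] E)) ν ν

variable {ν : Measure (E →L[ℝ] F)} {e f : E}

/-- The mean angle between the images of `v` and `w` under a random linear map with
distribution `ν`. -/
noncomputable def meanAngle (ν : Measure (E →L[ℝ] F)) (v w : E) : ℝ :=
  ∫ A, angle (A v) (A w) ∂ν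

lemma meanAngle_nonneg (ν : Measure (E →L[ℝ] F)) (v w : E) : 0 ≤ meanAngle ν v w :=
  integral_nonneg fun _ => angle_nonneg _ _

lemma meanAngle_comm (ν : Measure (E →L[ℝ] F)) (v w : E) :
    meanAngle ν v w = meanAngle ν w v := by
  simp only [meanAngle, angle_comm]

lemma meanAngle_smul_smul {r s : ℝ} (hr : 0 < r) (hs : 0 < s) (v w : E) :
    meanAngle ν (r • v) (s • w) = meanAngle ν v w := by
  simp only [meanAngle, map_smul, angle_smul_left_of_pos _ _ hr, angle_smul_right_of_pos _ _ hs]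

lemma meanAngle_self {v : E} (hv : ∀ᵐ A ∂ν, A v ≠ 0) : meanAngle ν v v = 0 := by
  refine integral_eq_zero_of_ae ?_
  filter_upwards [hv] with A hA using angle_self hA

lemma meanAngle_neg_self [IsProbabilityMeasure ν] {v : E} (hv : ∀ᵐ A ∂ν, A v ≠ 0) :
    meanAngle ν v (-v) = Real.pi := by
  have h : (fun A : E →L[ℝ] F => angle (A v) (A (-v))) =ᵐ[ν] fun _ => Real.pi := by
    filter_upwards [hv] with A hA
    rw [map_neg, angle_self_neg_of_nonzero hA]
  rw [meanAngle, integral_congr_ae h]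
  simp

lemma measurable_angle_apply (v w : E) : Measurable fun A : E →L[ℝ] F => angle (A v) (A w) := by
  have heval : ∀ u : E, Continuous fun A : E →L[ℝ] F => A u := continuous_eval_const
  exact Real.measurable_arccos.comp <| ((heval v).inner (heval w)).measurable.div
    ((heval v).norm.mul (heval w).norm).measurable

lemma integrable_angle_apply [IsFiniteMeasure ν] (v w : E) :
    Integrable (fun A => angle (A v) (A w)) ν := by
  refine .of_bound (measurable_angle_apply v w).aestronglyMeasurable Real.pi
    (.of_forall fun A => ?_)
  rw [Real.norm_of_nonneg (angle_nonneg _ _)]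
  exact angle_le_pi _ _

lemma IsIsometryInvariant.meanAngle_map (hν : IsIsometryInvariant ν) (L : E ≃ₗᵢ[ℝ] E) (v w : E) :
    meanAngle ν (L v) (L w) = meanAngle ν v w := by
  rw [meanAngle, meanAngle, ← (hν L).map_eq, integral_map (hν L).measurable.aemeasurable
    (measurable_angle_apply v w).aestronglyMeasurable, (hν L).map_eq]
  rfl

/-- The reflection in the line through `ellipsePoint e f ((a + b) / 2)` exchanges the arcs
`[a, a + b]` and `[0, b]`. -/
lemma IsIsometryInvariant.meanAngle_ellipsePoint_add_right (hν : IsIsometryInvariant ν)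
    (he : ‖e‖ = 1) (hf : ‖f‖ = 1) (hef : ⟪e, f⟫ = 0) (a b : ℝ) :
    meanAngle ν (ellipsePoint e f a) (ellipsePoint e f (a + b)) =
      meanAngle ν e (ellipsePoint e f b) := by
  rw [← hν.meanAngle_map (ℝ ∙ ellipsePoint e f ((a + b) / 2)).reflection,
    reflection_ellipsePoint he hf hef, reflection_ellipsePoint he hf hef, add_sub_cancel_left,
    sub_self, ellipsePoint_zero, meanAngle_comm]

lemma measurableSet_apply_ne_zero (v : E) : MeasurableSet {A : E →L[ℝ] F | A v ≠ 0} :=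
  (isOpen_ne.preimage (continuous_eval_const v)).measurableSet

lemma IsIsometryInvariant.ae_apply_ne_zero_iff (hν : IsIsometryInvariant ν) {v w : E}
    (hv : v ≠ 0) (hw : w ≠ 0) : (∀ᵐ A ∂ν, A v ≠ 0) ↔ ∀ᵐ A ∂ν, A w ≠ 0 := by
  have hv' := norm_ne_zero_iff.2 hv
  have hw' := norm_ne_zero_iff.2 hw
  let L := (ℝ ∙ (‖w‖ • v - ‖v‖ • w))ᗮ.reflection
  have hL : L (‖w‖ • v) = ‖v‖ • w := Submodule.reflection_sub (by simp [norm_smul, mul_comm])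
  calc (∀ᵐ A ∂ν, A v ≠ 0) ↔ ∀ᵐ A ∂ν, A (L v) ≠ 0 := by
        rw [← (hν L).map_eq, ae_map_iff (hν L).measurable.aemeasurable
          (measurableSet_apply_ne_zero v), (hν L).map_eq]
        rfl
    _ ↔ ∀ᵐ A ∂ν, A w ≠ 0 := by
        refine eventually_congr (.of_forall fun A => ?_)
        have h : ‖w‖ • A (L v) = ‖v‖ • A w := by rw [← map_smul, ← map_smul, hL, map_smul]
        rw [← smul_ne_zero_iff_right hw', h, smul_ne_zero_iff_right hv']

/-- By Fubini and Lebesgue-nullity of proper subspaces, almost every `A` is nonzero at almost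
every `v`; by invariance all nonzero `v` then behave alike. -/
lemma IsIsometryInvariant.ae_apply_ne_zero [FiniteDimensional ℝ E] [SFinite ν]
    (hν : IsIsometryInvariant ν) (hne : ∀ᵐ A ∂ν, A ≠ 0) {v : E} (hv : v ≠ 0) :
    ∀ᵐ A ∂ν, A v ≠ 0 := by
  borelize E
  have : Nontrivial E := ⟨v, 0, hv⟩
  have hker : ∀ᵐ A ∂ν, ∀ᵐ w : E, A w ≠ 0 := by
    filter_upwards [hne] with A hA
    have htop : A.ker ≠ ⊤ := fun h =>
      hA (ContinuousLinearMap.coe_injective (LinearMap.ker_eq_top.1 h))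
    exact measure_eq_zero_iff_ae_notMem.1 (Measure.addHaar_submodule volume _ htop)
  have hswap : ∀ᵐ w : E, ∀ᵐ A ∂ν, A w ≠ 0 := by
    have hopen : IsOpen {x : (E →L[ℝ] F) × E | x.1 x.2 ≠ 0} :=
      isOpen_ne.preimage (by fun_prop)
    exact (Measure.ae_ae_comm hopen.measurableSet).1 hker
  obtain ⟨w, hw, hw0⟩ := (hswap.and (Measure.ae_ne volume (0 : E))).exists
  exact (hν.ae_apply_ne_zero_iff hv hw0).2 hw

variable [IsProbabilityMeasure ν]

lemma IsIsometryInvariant.meanAngle_ellipsePoint (hν : IsIsometryInvariant ν)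
    (hne : ∀ v ≠ 0, ∀ᵐ A ∂ν, A v ≠ 0) (he : ‖e‖ = 1) (hf : ‖f‖ = 1) (hef : ⟪e, f⟫ = 0) {θ : ℝ}
    (hθ : θ ∈ Icc 0 Real.pi) : meanAngle ν e (ellipsePoint e f θ) = θ := by
  have hpoint : ∀ θ, ∀ᵐ A ∂ν, A (ellipsePoint e f θ) ≠ 0 := fun θ =>
    hne _ (norm_ne_zero_iff.1 (by rw [norm_ellipsePoint he hf hef]; exact one_ne_zero))
  have he0 : ∀ᵐ A ∂ν, A e ≠ 0 := by simpa using hpoint 0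
  have hπ : meanAngle ν e (ellipsePoint e f Real.pi) = Real.pi := by
    rw [← zero_add Real.pi, ellipsePoint_add_pi, ellipsePoint_zero, meanAngle_neg_self he0,
      zero_add]
  have hadd : ∀ a b, 0 ≤ a → 0 ≤ b → a + b ≤ Real.pi →
      meanAngle ν e (ellipsePoint e f (a + b)) =
        meanAngle ν e (ellipsePoint e f a) + meanAngle ν e (ellipsePoint e f b) := by
    intro a b ha hb hab
    rw [← hν.meanAngle_ellipsePoint_add_right he hf hef a b, meanAngle, meanAngle, meanAngle,
      ← integral_add (integrable_angle_apply _ _) (integrable_angle_apply _ _)]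
    refine integral_congr_ae ?_
    filter_upwards [he0, hpoint a] with A hAe hAa
    rw [map_ellipsePoint] at hAa
    simpa only [map_ellipsePoint] using angle_ellipsePoint_add ha hb hab hAe hAa
  have h := mul_eq_mul_of_additive_of_nonneg (fun _ _ => meanAngle_nonneg ν _ _) hadd hθ
  rw [hπ, mul_comm θ] at h
  exact mul_left_cancel₀ Real.pi_ne_zero h

lemma IsIsometryInvariant.meanAngle_eq_angle (hν : IsIsometryInvariant ν)
    (hne : ∀ v ≠ 0, ∀ᵐ A ∂ν, A v ≠ 0) {v w : E} (hv : v ≠ 0) (hw : w ≠ 0) :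
    meanAngle ν v w = angle v w := by
  by_cases hsin : Real.sin (angle v w) = 0
  · obtain h | h := sin_eq_zero_iff_angle_eq_zero_or_angle_eq_pi.1 hsin
    · obtain ⟨-, r, hr, rfl⟩ := angle_eq_zero_iff.1 h
      rw [h]
      simpa [meanAngle_self (hne v hv)] using meanAngle_smul_smul (ν := ν) one_pos hr v v
    · obtain ⟨-, r, hr, rfl⟩ := angle_eq_pi_iff.1 h
      rw [h]
      simpa [meanAngle_neg_self (hne v hv)] using
        meanAngle_smul_smul (ν := ν) one_pos (neg_pos.2 hr) v (-v)
  · obtain ⟨e, f, he, hf, hef, hve, hwf⟩ := exists_orthonormal_ellipsePoint hv hw hsin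
    conv_lhs => rw [hve, hwf]
    rw [meanAngle_smul_smul (norm_pos_iff.2 hv) (norm_pos_iff.2 hw)]
    exact hν.meanAngle_ellipsePoint hne he hf hef ⟨angle_nonneg v w, angle_le_pi v w⟩

lemma IsIsometryInvariant.lintegral_ofReal_angle (hν : IsIsometryInvariant ν)
    (hne : ∀ v ≠ 0, ∀ᵐ A ∂ν, A v ≠ 0) {v w : E} (hv : v ≠ 0) (hw : w ≠ 0) :
    ∫⁻ A, ENNReal.ofReal (angle (A v) (A w)) ∂ν = ENNReal.ofReal (angle v w) := by
  rw [← ofReal_integral_eq_lintegral_ofReal (integrable_angle_apply v w)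
    (.of_forall fun _ => angle_nonneg _ _)]
  exact congrArg _ (hν.meanAngle_eq_angle hne hv hw)

lemma IsIsometryInvariant.lintegral_ofReal_turnAngle (hν : IsIsometryInvariant ν)
    (hne : ∀ v ≠ 0, ∀ᵐ A ∂ν, A v ≠ 0) (u : E) {v : E} (hv : v ≠ 0) :
    ∫⁻ A, ENNReal.ofReal (turnAngle (A u) (A v)) ∂ν = ENNReal.ofReal (turnAngle u v) := by
  obtain rfl | hu := eq_or_ne u 0
  · simp
  rw [turnAngle_of_ne_zero hu, ← hν.lintegral_ofReal_angle hne hu hv]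
  refine lintegral_congr_ae ?_
  filter_upwards [hne u hu] with A hA
  rw [turnAngle_of_ne_zero hA]

lemma IsIsometryInvariant.lintegral_ofReal_turningFrom (hν : IsIsometryInvariant ν)
    (hne : ∀ v ≠ 0, ∀ᵐ A ∂ν, A v ≠ 0) (u a : E) (l : List E) :
    ∫⁻ A, ENNReal.ofReal (turningFrom (A u) (A a) (l.map A)) ∂ν =
      ENNReal.ofReal (turningFrom u a l) := by
  induction l generalizing u a with
  | nil => simp
  | cons b l ih =>
    obtain rfl | hba := eq_or_ne b a
    · simpa using ih u b
    have hsub : b - a ≠ 0 := sub_ne_zero.2 hba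
    have heval : ∀ v : E, Continuous fun A : E →L[ℝ] F => A v := continuous_eval_const
    have hlsc : LowerSemicontinuous fun A : E →L[ℝ] F =>
        turningFrom (A (b - a)) (A b) (l.map A) := fun A =>
      lowerSemicontinuousAt_turningFrom (heval _).continuousAt (heval _).continuousAt
        (fun v => (heval v).continuousAt) l
    have hsplit : ∀ᵐ A : E →L[ℝ] F ∂ν,
        ENNReal.ofReal (turningFrom (A u) (A a) ((b :: l).map A)) =
          ENNReal.ofReal (turnAngle (A u) (A (b - a))) +
            ENNReal.ofReal (turningFrom (A (b - a)) (A b) (l.map A)) := by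
      filter_upwards [hne _ hsub] with A hA
      rw [map_sub] at hA ⊢
      rw [List.map_cons, turningFrom_cons_of_ne (sub_ne_zero.1 hA),
        ENNReal.ofReal_add (turnAngle_nonneg _ _) (turningFrom_nonneg _ _ _)]
    rw [lintegral_congr_ae hsplit, lintegral_add_right _ hlsc.measurable.ennreal_ofReal,
      hν.lintegral_ofReal_turnAngle hne u hsub, ih, turningFrom_cons_of_ne hba,
      ENNReal.ofReal_add (turnAngle_nonneg _ _) (turningFrom_nonneg _ _ _)]

lemma IsIsometryInvariant.lintegral_ofReal_turning (hν : IsIsometryInvariant ν)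
    (hne : ∀ v ≠ 0, ∀ᵐ A ∂ν, A v ≠ 0) (l : List E) :
    ∫⁻ A, ENNReal.ofReal (turning (l.map A)) ∂ν = ENNReal.ofReal (turning l) := by
  cases l with
  | nil => simp [turning]
  | cons a l => simpa [turning] using hν.lintegral_ofReal_turningFrom hne 0 a l

theorem IsIsometryInvariant.lintegral_totalCurvature [FiniteDimensional ℝ E]
    [SecondCountableTopology F] (hν : IsIsometryInvariant ν) (hne : ∀ᵐ A ∂ν, A ≠ 0)
    {ι : Type*} [LinearOrder ι] (γ : ι → E) :
    ∫⁻ A, totalCurvature (A ∘ γ) ∂ν = totalCurvature γ := by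
  have hlsc : ∀ s, LowerSemicontinuous fun A : E →L[ℝ] F =>
      ENNReal.ofReal (inscribedTurning (A ∘ γ) s) := fun s =>
    lowerSemicontinuous_ofReal_turning (fun i => continuous_eval_const (γ i)) _
  have hmono : Monotone fun s (A : E →L[ℝ] F) => ENNReal.ofReal (inscribedTurning (A ∘ γ) s) :=
    fun s t hst A => ENNReal.ofReal_le_ofReal (monotone_inscribedTurning _ hst)
  calc ∫⁻ A, totalCurvature (A ∘ γ) ∂ν
      = ⨆ s, ∫⁻ A, ENNReal.ofReal (inscribedTurning (A ∘ γ) s) ∂ν :=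
        lintegral_iSup_of_lowerSemicontinuous ν hlsc hmono.directed_le
    _ = totalCurvature γ := iSup_congr fun s => by
        simp only [inscribedTurning, ← List.map_map]
        exact hν.lintegral_ofReal_turning (fun _ => hν.ae_apply_ne_zero hne) _

end RandomLinearMap

section OrthogonalGroup

lemma isMulRightInvariant_of_isMulLeftInvariant {G : Type*} [MeasurableSpace G] [Group G]
    [MeasurableMul₂ G] [MeasurableInv G] (μ : Measure G) [IsProbabilityMeasure μ]
    [μ.IsMulLeftInvariant] : μ.IsMulRightInvariant where
  map_mul_right_eq_self g := by
    have : IsProbabilityMeasure (μ.map (· * g)) :=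
      Measure.isProbabilityMeasure_map (measurable_mul_const g).aemeasurable
    simpa using measure_eq_div_smul (μ.map (· * g)) μ (s := univ) (by simp) (by simp)

variable {d : ℕ} {F : Type*} [NormedAddCommGroup F] [InnerProductSpace ℝ F]

instance : BorelSpace (Matrix (Fin d) (Fin d) ℝ) :=
  inferInstanceAs (BorelSpace (Fin d → Fin d → ℝ))

instance : SecondCountableTopology (Matrix.orthogonalGroup (Fin d) ℝ) :=
  have : SecondCountableTopology (Matrix (Fin d) (Fin d) ℝ) :=
    inferInstanceAs (SecondCountableTopology (Fin d → Fin d → ℝ))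
  Topology.IsEmbedding.subtypeVal.secondCountableTopology

/-- Orthogonal matrices act on `EuclideanSpace ℝ (Fin d)` as its linear isometries. -/
noncomputable def orthogonalGroupEquiv (d : ℕ) : Matrix.orthogonalGroup (Fin d) ℝ ≃*
    (EuclideanSpace ℝ (Fin d) ≃ₗᵢ[ℝ] EuclideanSpace ℝ (Fin d)) :=
  (Unitary.mapEquiv
    { (Matrix.toEuclideanCLM (n := Fin d) (𝕜 := ℝ)).toMulEquiv with
      map_star' := (Matrix.toEuclideanCLM (n := Fin d) (𝕜 := ℝ)).map_star' }).toMulEquiv.trans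
    Unitary.linearIsometryEquiv

lemma coe_orthogonalGroupEquiv (g : Matrix.orthogonalGroup (Fin d) ℝ) :
    (orthogonalGroupEquiv d g : EuclideanSpace ℝ (Fin d) →L[ℝ] EuclideanSpace ℝ (Fin d)) =
      Matrix.toEuclideanCLM (n := Fin d) (𝕜 := ℝ) g :=
  rfl

/-- The linear map `x ↦ P (g x)`, for an orthogonal matrix `g`. -/
noncomputable def compOrthogonal (P : EuclideanSpace ℝ (Fin d) →L[ℝ] F)
    (g : Matrix.orthogonalGroup (Fin d) ℝ) : EuclideanSpace ℝ (Fin d) →L[ℝ] F :=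
  P ∘L Matrix.toEuclideanCLM (n := Fin d) (𝕜 := ℝ) g

variable (P : EuclideanSpace ℝ (Fin d) →L[ℝ] F)

lemma continuous_compOrthogonal : Continuous (compOrthogonal P) := by
  have h : Continuous (Matrix.toEuclideanCLM (n := Fin d) (𝕜 := ℝ)) :=
    LinearMap.continuous_of_finiteDimensional
      (Matrix.toEuclideanCLM (n := Fin d) (𝕜 := ℝ)).toAlgEquiv.toLinearMap
  exact continuous_const.clm_comp (h.comp continuous_subtype_val)

lemma compOrthogonal_mul (g h : Matrix.orthogonalGroup (Fin d) ℝ) :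
    compOrthogonal P (g * h) =
      compOrthogonal P g ∘L Matrix.toEuclideanCLM (n := Fin d) (𝕜 := ℝ) h := by
  rw [compOrthogonal, Submonoid.coe_mul, map_mul]
  rfl

lemma compOrthogonal_ne_zero {P : EuclideanSpace ℝ (Fin d) →L[ℝ] F} (hP : P ≠ 0)
    (g : Matrix.orthogonalGroup (Fin d) ℝ) : compOrthogonal P g ≠ 0 := by
  contrapose! hP
  ext x
  have h := congr($hP ((orthogonalGroupEquiv d g).symm x))
  rw [compOrthogonal, ← coe_orthogonalGroupEquiv] at h
  simpa using h

lemma ae_ne_zero_map_compOrthogonal (hP : P ≠ 0)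
    (μ : Measure (Matrix.orthogonalGroup (Fin d) ℝ)) :
    ∀ᵐ A ∂μ.map (compOrthogonal P), A ≠ 0 :=
  (ae_map_iff (continuous_compOrthogonal P).measurable.aemeasurable isOpen_ne.measurableSet).2
    (.of_forall (compOrthogonal_ne_zero hP))

lemma isIsometryInvariant_map_compOrthogonal
    (μ : Measure (Matrix.orthogonalGroup (Fin d) ℝ)) [μ.IsMulRightInvariant] :
    IsIsometryInvariant (μ.map (compOrthogonal P)) := by
  intro L
  obtain ⟨h, rfl⟩ := (orthogonalGroupEquiv d).surjective L
  have hcomp : Measurable fun A : EuclideanSpace ℝ (Fin d) →L[ℝ] F => A ∘L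
      (orthogonalGroupEquiv d h : EuclideanSpace ℝ (Fin d) →L[ℝ] EuclideanSpace ℝ (Fin d)) :=
    (continuous_id.clm_comp continuous_const).measurable
  refine ⟨hcomp, ?_⟩
  have hmeas := (continuous_compOrthogonal P).measurable
  rw [Measure.map_map hcomp hmeas]
  conv_rhs => rw [← map_mul_right_eq_self μ h, Measure.map_map hmeas (measurable_mul_const h)]
  congr 1
  exact funext fun g => (compOrthogonal_mul P g h).symm

/-- The orthogonal projection of `ℝᵈ` to its first `k` coordinates. -/
noncomputable def truncation {k : ℕ} (h : k ≤ d) :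
    EuclideanSpace ℝ (Fin d) →L[ℝ] EuclideanSpace ℝ (Fin k) :=
  (EuclideanSpace.equiv (Fin k) ℝ).symm.toContinuousLinearMap ∘L
    ContinuousLinearMap.pi fun i => EuclideanSpace.proj (Fin.castLE h i)

lemma truncation_ne_zero {k : ℕ} (hk : 1 ≤ k) (h : k ≤ d) : truncation h ≠ 0 := by
  intro h₀
  simpa [truncation] using congr($h₀ (EuclideanSpace.single (Fin.castLE h ⟨0, hk⟩) 1) ⟨0, hk⟩)

end OrthogonalGroup

theorem fary_average_projection_general {d : ℕ} {F : Type*} [NormedAddCommGroup F]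
    [InnerProductSpace ℝ F] [SecondCountableTopology F]
    {P : EuclideanSpace ℝ (Fin d) →L[ℝ] F} (hP : P ≠ 0)
    (γ : ℝ → EuclideanSpace ℝ (Fin d)) (a b : ℝ)
    (μ : Measure (Matrix.orthogonalGroup (Fin d) ℝ)) [IsProbabilityMeasure μ]
    [μ.IsMulLeftInvariant] :
    arcTC γ a b = ∫⁻ g, arcTC (fun t => P (Matrix.toEuclideanCLM (n := Fin d) (𝕜 := ℝ)
      (g : Matrix (Fin d) (Fin d) ℝ) (γ t))) a b ∂μ := by
  have := isMulRightInvariant_of_isMulLeftInvariant μ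
  have hmeas := (continuous_compOrthogonal P).measurable
  have := Measure.isProbabilityMeasure_map (μ := μ) hmeas.aemeasurable
  have hlsc : LowerSemicontinuous fun A : EuclideanSpace ℝ (Fin d) →L[ℝ] F =>
      totalCurvature (A ∘ fun t : Icc a b => γ t) :=
    lowerSemicontinuous_totalCurvature fun t => continuous_eval_const (γ t)
  calc arcTC γ a b
    _ = totalCurvature fun t : Icc a b => γ t := arcTC_eq_totalCurvature γ a b
    _ = ∫⁻ A, totalCurvature (A ∘ fun t : Icc a b => γ t) ∂μ.map (compOrthogonal P) :=
        ((isIsometryInvariant_map_compOrthogonal P μ).lintegral_totalCurvature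
          (ae_ne_zero_map_compOrthogonal P hP μ) _).symm
    _ = ∫⁻ g, totalCurvature (compOrthogonal P g ∘ fun t : Icc a b => γ t) ∂μ :=
        lintegral_map hlsc.measurable hmeas
    _ = _ := lintegral_congr fun g =>
        (arcTC_eq_totalCurvature (fun t => compOrthogonal P g (γ t)) a b).symm

/-- Fáry's averaged-projection formula: for a continuous curve
`γ : [0,1] → ℝᵈ` and `1 ≤ k < d`, the total curvature of `γ` equals the average, over
the Haar probability measure on the orthogonal group `O(d)` (characterized as a
left-invariant probability measure), of the total curvature of the orthogonal
projections of the rotated curves to the first `k` coordinates. -/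
theorem fary_average_projection (d k : ℕ) (hk : 1 ≤ k) (hkd : k < d)
    (γ : ℝ → EuclideanSpace ℝ (Fin d)) (hγ : ContinuousOn γ (Set.Icc 0 1))
    (μ : MeasureTheory.Measure (Matrix.orthogonalGroup (Fin d) ℝ))
    [MeasureTheory.IsProbabilityMeasure μ]
    (hinv : ∀ g : Matrix.orthogonalGroup (Fin d) ℝ, μ.map (fun h => g * h) = μ) :
    arcTC γ 0 1 =
      ∫⁻ g, arcTC (fun t => (EuclideanSpace.equiv (Fin k) ℝ).symm fun i =>
          Matrix.mulVec (g : Matrix (Fin d) (Fin d) ℝ)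
            ((EuclideanSpace.equiv (Fin d) ℝ) (γ t)) (Fin.castLE hkd.le i)) 0 1 ∂μ := by
  have : μ.IsMulLeftInvariant := ⟨hinv⟩
  exact fary_average_projection_general (truncation_ne_zero hk hkd.le) γ 0 1 μ
end

section
/- (Milnor's lemma) If K : ℝ/ℤ → ℝ³ is a knotted closed curve, then for every unit vector v ∈ ℝ³, the projection of K to the line in direction v, i.e. the closed curve t ↦ ⟨K(t), v⟩ in ℝ = ℝ¹, has total curvature at least 4π. -/
open Set Filter MeasureTheory
open scoped ENNReal NNReal RealInnerProductSpace

/-- `K : ℝ/ℤ → ℝ³` is unknotted if there is an ambient isotopy `H : [0,1] × ℝ³ → ℝ³`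
with `H 0 = id`, each `H t` a homeomorphism of `ℝ³`, and `H 1` carrying the image of `K`
onto the round unit circle in the `xy`-plane. -/
def Unknotted (K : AddCircle (1 : ℝ) → EuclideanSpace ℝ (Fin 3)) : Prop :=
  ∃ H : ℝ × EuclideanSpace ℝ (Fin 3) → EuclideanSpace ℝ (Fin 3),
    ContinuousOn H (Set.Icc (0 : ℝ) 1 ×ˢ Set.univ) ∧
    (∀ x, H (0, x) = x) ∧
    (∀ t ∈ Set.Icc (0 : ℝ) 1, IsHomeomorph fun x => H (t, x)) ∧
    (fun x => H (1, x)) '' Set.range K =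
      {p : EuclideanSpace ℝ (Fin 3) | p 0 ^ 2 + p 1 ^ 2 = 1 ∧ p 2 = 0}


/-!
If the total curvature of the height `t ↦ ⟪K t, v⟫` is below `4π`, then no four cyclically ordered
parameters have alternating heights: the quadrilateral inscribed at such parameters turns by `π` at
each of its four vertices. Hence the height increases weakly along one arc from its minimum to its
maximum and along the complementary arc as well.

Any two simple closed curves of this kind are ambient isotopic, and the round circle is one in
every direction `v`. To compare them, tilt space slightly along vertical lines so that the height
becomes strictly monotone on both arcs, which are then graphs of two functions of the height that
agree only at its extreme values. Subtracting the first function moves it to `0`; the other one is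
a path in `ℂ` without interior zeros, whose argument lifts to a continuous function, so rotating
each level by minus that argument makes it nonnegative; finally its profile is rescaled.
-/

open scoped unitInterval Topology

section UnitIntervalProjection

/-- The retraction of the line onto the unit interval. -/
noncomputable abbrev clamp : ℝ → I := projIcc 0 1 zero_le_one

lemma mul_clamp_div {r : ℝ} (hr : 0 < r) (x : ℝ) : r * clamp (x / r) = max 0 (min r x) := by
  rw [coe_projIcc, mul_max_of_nonneg _ _ hr.le, mul_min_of_nonneg _ _ hr.le, mul_zero, mul_one,
    mul_div_cancel₀ _ hr.ne']

lemma coe_clamp_eq_zero {x : ℝ} : (clamp x : ℝ) = 0 ↔ x ≤ 0 := by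
  rw [← projIcc_eq_left (zero_lt_one' ℝ), Subtype.ext_iff]

lemma coe_clamp_eq_one {x : ℝ} : (clamp x : ℝ) = 1 ↔ 1 ≤ x := by
  rw [← projIcc_eq_right (zero_lt_one' ℝ), Subtype.ext_iff]

lemma clamp_div_mono {b : ℝ} (hb : 0 ≤ b) {x y : ℝ} (h : x ≤ y) : clamp (x / b) ≤ clamp (y / b) :=
  monotone_projIcc _ (div_le_div_of_nonneg_right h hb)

lemma norm_clamp_le_one (x : ℝ) : ‖(clamp x : ℝ)‖ ≤ 1 := by
  rw [Real.norm_of_nonneg (clamp x).2.1]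
  exact (clamp x).2.2

end UnitIntervalProjection

lemma continuous_mul_of_norm_le_one {X R : Type*} [TopologicalSpace X] [SeminormedRing R]
    {f q : X → R} (hf : Continuous f) (hq : ∀ x, f x ≠ 0 → ContinuousAt q x)
    (hq1 : ∀ x, ‖q x‖ ≤ 1) : Continuous fun x => f x * q x := by
  rw [continuous_iff_continuousAt]
  intro x
  by_cases hx : f x = 0
  · have hbound (y : X) : ‖f y * q y‖ ≤ ‖f y‖ :=
      (norm_mul_le _ _).trans (mul_le_of_le_one_right (norm_nonneg _) (hq1 y))
    rw [ContinuousAt, hx, zero_mul]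
    exact squeeze_zero_norm hbound (by simpa [hx] using hf.norm.tendsto x)
  · exact hf.continuousAt.mul (hq x hx)

section AmbientIsotopy

variable {X Y : Type*} [TopologicalSpace X] [TopologicalSpace Y]

/-- Two subsets of a space are ambient isotopic if a continuous family of self-homeomorphisms,
starting at the identity, carries the first to the second. The inverses are also required to vary
continuously, which makes the relation symmetric without assumptions on the space. -/
def AmbientIsotopic (A B : Set X) : Prop :=
  ∃ F : I → X ≃ₜ X, Continuous (fun p : I × X => F p.1 p.2) ∧
    Continuous (fun p : I × X => (F p.1).symm p.2) ∧ F 0 = Homeomorph.refl X ∧ F 1 '' A = B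

namespace AmbientIsotopic

variable {A B C : Set X}

protected lemma symm (h : AmbientIsotopic A B) : AmbientIsotopic B A := by
  obtain ⟨F, hF, hF', hF0, rfl⟩ := h
  refine ⟨fun t => (F 1).symm.trans (F (σ t)), ?_, ?_, ?_, ?_⟩
  · exact hF.comp (f := fun p : I × X => (σ p.1, (F 1).symm p.2)) (by fun_prop)
  · exact (F 1).continuous.comp (hF'.comp (f := fun p : I × X => (σ p.1, p.2)) (by fun_prop))
  · ext x
    simp
  · simp [image_image, hF0]

protected lemma trans (h : AmbientIsotopic A B) (h' : AmbientIsotopic B C) :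
    AmbientIsotopic A C := by
  obtain ⟨F, hF, hF', hF0, rfl⟩ := h
  obtain ⟨G, hG, hG', hG0, rfl⟩ := h'
  refine ⟨fun t => (F t).trans (G t), ?_, ?_, ?_, ?_⟩
  · exact hG.comp (f := fun p : I × X => (p.1, F p.1 p.2)) (by fun_prop)
  · exact hF'.comp (f := fun p : I × X => (p.1, (G p.1).symm p.2)) (by fun_prop)
  · ext x
    simp [hF0, hG0]
  · rw [image_image]
    rfl

lemma of_image (e : X ≃ₜ Y) (h : AmbientIsotopic (e '' A) (e '' B)) : AmbientIsotopic A B := by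
  obtain ⟨F, hF, hF', hF0, hF1⟩ := h
  refine ⟨fun t => (e.trans (F t)).trans e.symm, ?_, ?_, ?_, ?_⟩
  · exact e.symm.continuous.comp (hF.comp (f := fun p : I × X => (p.1, e p.2)) (by fun_prop))
  · exact e.symm.continuous.comp (hF'.comp (f := fun p : I × X => (p.1, e p.2)) (by fun_prop))
  · ext x
    simp [hF0]
  · have hB : e.symm '' (e '' B) = B := by simp [image_image]
    rw [← hB, ← hF1]
    simp only [image_image]
    rfl

lemma translate {V : Type*} [AddCommGroup V] [TopologicalSpace V] [IsTopologicalAddGroup V]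
    [Module ℝ V] [ContinuousSMul ℝ V] {a : Y → V} (ha : Continuous a) (A : Set (V × Y)) :
    AmbientIsotopic A ((fun p => (p.1 + a p.2, p.2)) '' A) := by
  refine ⟨fun t =>
    { toFun := fun p => (p.1 + (t : ℝ) • a p.2, p.2)
      invFun := fun p => (p.1 - (t : ℝ) • a p.2, p.2)
      left_inv := fun p => by simp
      right_inv := fun p => by simp
      continuous_toFun := by fun_prop
      continuous_invFun := by fun_prop }, ?_, ?_, ?_, ?_⟩
  · exact (by fun_prop :
      Continuous fun p : I × V × Y => (p.2.1 + (p.1 : ℝ) • a p.2.2, p.2.2))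
  · exact (by fun_prop :
      Continuous fun p : I × V × Y => (p.2.1 - (p.1 : ℝ) • a p.2.2, p.2.2))
  · ext p <;> simp
  · simp

lemma unknotted {K : AddCircle (1 : ℝ) → EuclideanSpace ℝ (Fin 3)}
    (h : AmbientIsotopic (range K) {p | p 0 ^ 2 + p 1 ^ 2 = 1 ∧ p 2 = 0}) : Unknotted K := by
  obtain ⟨F, hF, -, hF0, hF1⟩ := h
  refine ⟨fun p => F (clamp p.1) p.2, ?_, fun x => ?_, fun t _ => (F (clamp t)).isHomeomorph, ?_⟩
  · exact (hF.comp (f := fun p : ℝ × EuclideanSpace ℝ (Fin 3) => (clamp p.1, p.2))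
      ((continuous_projIcc.comp continuous_fst).prodMk continuous_snd)).continuousOn
  · have h0 : clamp 0 = 0 := projIcc_left _
    simpa [h0] using DFunLike.congr_fun hF0 x
  · have h1 : clamp 1 = 1 := projIcc_right _
    simpa only [h1] using hF1

end AmbientIsotopic

end AmbientIsotopy

section FiberwiseIncreasing

variable {X : Type*} [TopologicalSpace X]

/-- A continuous function on `X × ℝ` restricting to an increasing bijection of every vertical line
`{x} × ℝ`; bijectivity is encoded by the limits at `±∞`. -/
structure FiberwiseIncreasing (g : X × ℝ → ℝ) : Prop where
  continuous : Continuous g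
  strictMono (x : X) : StrictMono fun y => g (x, y)
  tendsto_atTop (x : X) : Tendsto (fun y => g (x, y)) atTop atTop
  tendsto_atBot (x : X) : Tendsto (fun y => g (x, y)) atBot atBot

namespace FiberwiseIncreasing

variable {g : X × ℝ → ℝ}

lemma exists_continuous_inverse (hg : FiberwiseIncreasing g) :
    ∃ k : X × ℝ → ℝ, Continuous k ∧ (∀ x y, k (x, g (x, y)) = y) ∧ ∀ x y, g (x, k (x, y)) = y := by
  have hcont := hg.continuous
  have hsurj (x : X) : Function.Surjective fun y => g (x, y) :=
    Continuous.surjective (by fun_prop) (hg.tendsto_atTop x) (hg.tendsto_atBot x)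
  choose k hk using hsurj
  refine ⟨fun p => k p.1 p.2, ?_, fun x y => (hg.strictMono x).injective (hk x _), hk⟩
  rw [continuous_iff_continuousAt]
  rintro ⟨x, y⟩
  rw [ContinuousAt, (nhds_basis_Ioo (k x y)).tendsto_right_iff]
  rintro ⟨a, b⟩ ⟨ha, hb⟩
  have hlower : ∀ᶠ p : X × ℝ in 𝓝 (x, y), g (p.1, a) < p.2 := by
    refine (isOpen_lt (by fun_prop) continuous_snd).mem_nhds ?_
    exact (hg.strictMono x ha).trans_eq (hk x y)
  have hupper : ∀ᶠ p : X × ℝ in 𝓝 (x, y), p.2 < g (p.1, b) := by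
    refine (isOpen_lt continuous_snd (by fun_prop)).mem_nhds ?_
    exact (hk x y).symm.trans_lt (hg.strictMono x hb)
  filter_upwards [hlower, hupper] with p hpa hpb
  exact ⟨(hg.strictMono p.1).lt_iff_lt.1 (hpa.trans_eq (hk p.1 p.2).symm),
    (hg.strictMono p.1).lt_iff_lt.1 ((hk p.1 p.2).trans_lt hpb)⟩

lemma affine (hg : FiberwiseIncreasing g) {c : ℝ} (hc : 0 < c) (d : ℝ) :
    FiberwiseIncreasing fun p => c * g p + d where
  continuous := by have := hg.continuous; fun_prop
  strictMono x := ((hg.strictMono x).const_mul hc).add_const d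
  tendsto_atTop x := tendsto_atTop_add_const_right _ d ((hg.tendsto_atTop x).const_mul_atTop hc)
  tendsto_atBot x := tendsto_atBot_add_const_right _ d ((hg.tendsto_atBot x).const_mul_atBot hc)

lemma of_abs_sub_le (hg : Continuous g) (hmono : ∀ x, StrictMono fun y => g (x, y))
    {C : X → ℝ} (hC : ∀ x y, |g (x, y) - y| ≤ C x) : FiberwiseIncreasing g where
  continuous := hg
  strictMono := hmono
  tendsto_atTop x := tendsto_atTop_mono (fun y => by linarith [(abs_le.1 (hC x y)).1])
    (tendsto_atTop_add_const_right atTop (-C x) (f := fun y => y) tendsto_id)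
  tendsto_atBot x := tendsto_atBot_mono (fun y => by linarith [(abs_le.1 (hC x y)).2])
    (tendsto_atBot_add_const_right atBot (C x) (f := fun y => y) tendsto_id)

lemma of_monotone_add {W : X × ℝ → ℝ} (hW : Continuous W)
    (hmono : ∀ x, Monotone fun y => W (x, y)) :
    FiberwiseIncreasing fun p => W p + p.2 where
  continuous := by fun_prop
  strictMono x := (hmono x).add_strictMono strictMono_id
  tendsto_atTop x := tendsto_atTop_add_left_of_le' _ (W (x, 0))
    ((eventually_ge_atTop 0).mono fun _ hy => hmono x hy) tendsto_id
  tendsto_atBot x := tendsto_atBot_add_left_of_ge' _ (W (x, 0))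
    ((eventually_le_atBot 0).mono fun _ hy => hmono x hy) tendsto_id

lemma interpolate (hg : FiberwiseIncreasing g) :
    FiberwiseIncreasing fun p : (I × X) × ℝ => (1 - p.1.1) * p.2 + p.1.1 * g (p.1.2, p.2) where
  continuous := by have := hg.continuous; fun_prop
  strictMono := by
    rintro ⟨t, x⟩ y z hyz
    have hgyz := hg.strictMono x hyz
    rcases t.2.1.eq_or_lt with ht | ht
    · simpa [← ht]
    · have := t.2.2
      dsimp only at hgyz ⊢
      nlinarith
  tendsto_atTop := by
    rintro ⟨t, x⟩
    refine Filter.tendsto_atTop.2 fun c => ?_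
    filter_upwards [(hg.tendsto_atTop x).eventually_ge_atTop c, eventually_ge_atTop c] with y hgy hy
    nlinarith [t.2.1, t.2.2]
  tendsto_atBot := by
    rintro ⟨t, x⟩
    refine Filter.tendsto_atBot.2 fun c => ?_
    filter_upwards [(hg.tendsto_atBot x).eventually_le_atBot c, eventually_le_atBot c] with y hgy hy
    nlinarith [t.2.1, t.2.2]

lemma ambientIsotopic (hg : FiberwiseIncreasing g) (A : Set (X × ℝ)) :
    AmbientIsotopic A ((fun p => (p.1, g p)) '' A) := by
  obtain ⟨k, hk, hkg, hgk⟩ := hg.interpolate.exists_continuous_inverse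
  have hcont := hg.continuous
  refine ⟨fun t =>
    { toFun := fun p => (p.1, (1 - t) * p.2 + t * g p)
      invFun := fun p => (p.1, k ((t, p.1), p.2))
      left_inv := fun p => Prod.ext rfl (hkg (t, p.1) p.2)
      right_inv := fun p => Prod.ext rfl (hgk (t, p.1) p.2)
      continuous_toFun := by fun_prop
      continuous_invFun := by fun_prop }, ?_, ?_, ?_, ?_⟩
  · exact (by fun_prop :
      Continuous fun q : I × X × ℝ => (q.2.1, (1 - (q.1 : ℝ)) * q.2.2 + q.1 * g q.2))
  · exact (by fun_prop : Continuous fun q : I × X × ℝ => (q.2.1, k ((q.1, q.2.1), q.2.2)))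
  · ext p <;> simp
  · simp

end FiberwiseIncreasing

end FiberwiseIncreasing

section MonotoneExtension

lemma exists_monotone_modulus {S : Type*} [TopologicalSpace S] [CompactSpace S] {a b : S → ℝ}
    (ha : Continuous a) (hb : Continuous b) (hb0 : ∀ s, 0 ≤ b s) (hab : ∀ s, b s = 0 → a s ≤ 0) :
    ∃ ω : ℝ → ℝ, Continuous ω ∧ Monotone ω ∧ ω 0 = 0 ∧ ∀ s, a s ≤ ω (b s) := by
  -- Where `b` vanishes the quotient is junk, but there the factor `max (a s) 0` vanishes too.
  let c : ℝ → S → ℝ := fun δ s => max (a s) 0 * clamp (δ / b s)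
  have hc : Continuous fun p : ℝ × S => c p.1 p.2 := by
    refine continuous_mul_of_norm_le_one (by fun_prop) (fun p hp => ?_)
      fun p => norm_clamp_le_one _
    have hbp : b p.2 ≠ 0 := fun h => hp (max_eq_right (hab _ h))
    have hdiv : ContinuousAt (fun p : ℝ × S => p.1 / b p.2) p :=
      ContinuousAt.div (by fun_prop) (by fun_prop) hbp
    exact continuous_subtype_val.continuousAt.comp (continuous_projIcc.continuousAt.comp hdiv)
  have hbdd (δ : ℝ) : BddAbove (range (c δ)) :=
    (isCompact_range (f := c δ) (hc.comp (by fun_prop : Continuous fun s => (δ, s)))).bddAbove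
  refine ⟨fun δ => ⨆ s, c δ s, ?_, fun δ δ' hδ => ?_, ?_, fun s => ?_⟩
  · simpa only [image_univ, sSup_range] using isCompact_univ.continuous_sSup hc
  · exact ciSup_mono (hbdd δ') fun s =>
      mul_le_mul_of_nonneg_left (clamp_div_mono (hb0 s) hδ) (le_max_right _ _)
  · simp [c]
  · refine le_trans ?_ (le_ciSup (hbdd (b s)) s)
    by_cases h : b s = 0
    · simp [c, h, hab s h]
    · simp [c, div_self h]

lemma exists_fiberwise_monotone_extension {T X : Type*} [TopologicalSpace T] [CompactSpace T]
    [MetricSpace X] {κ : T → X × ℝ} (hκ : Continuous κ) {w : T → ℝ} (hw : Continuous w)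
    (h : ∀ s t, (κ s).1 = (κ t).1 → (κ s).2 ≤ (κ t).2 → w s ≤ w t) :
    ∃ W : X × ℝ → ℝ, Continuous W ∧ (∀ x, Monotone fun y => W (x, y)) ∧ ∀ t, W (κ t) = w t := by
  -- McShane's extension formula for the asymmetric distance `d`, in which moving up is free.
  let d : X × ℝ → X × ℝ → ℝ := fun p q => max (dist p.1 q.1) (max 0 (p.2 - q.2))
  obtain ⟨ω, hω, hωmono, hω0, hle⟩ := exists_monotone_modulus (S := T × T)
    (a := fun p => w p.1 - w p.2) (b := fun p => d (κ p.1) (κ p.2)) (by fun_prop) (by fun_prop)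
    (fun p => le_max_of_le_left dist_nonneg) fun p hp => by
      have hfst : dist (κ p.1).1 (κ p.2).1 ≤ 0 := (le_max_left _ _).trans hp.le
      have hsnd : (κ p.1).2 - (κ p.2).2 ≤ 0 :=
        ((le_max_right _ _).trans (le_max_right _ _)).trans hp.le
      exact sub_nonpos.2 (h p.1 p.2 (dist_le_zero.1 hfst) (sub_nonpos.1 hsnd))
  let f : X × ℝ → T → ℝ := fun p t => w t + ω (d p (κ t))
  have hf : Continuous fun q : (X × ℝ) × T => f q.1 q.2 := by fun_prop
  have hbdd (p : X × ℝ) : BddBelow (range (f p)) :=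
    (isCompact_range (f := f p) (hf.comp (by fun_prop : Continuous fun t => (p, t)))).bddBelow
  refine ⟨fun p => ⨅ t, f p t, ?_, fun x y y' hy => ?_, fun t => le_antisymm ?_ ?_⟩
  · simpa only [image_univ, sInf_range] using isCompact_univ.continuous_sInf hf
  · refine ciInf_mono (hbdd _) fun t => add_le_add_right (hωmono ?_) _
    exact max_le_max_left _ (max_le_max_left _ (sub_le_sub_right hy _))
  · exact (ciInf_le (hbdd _) t).trans (by simp [f, d, hω0])
  · have : Nonempty T := ⟨t⟩
    exact le_ciInf fun s => sub_le_iff_le_add'.1 (hle (t, s))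

end MonotoneExtension

section HeightTilts

lemma exists_strictMono_le {m : I → ℝ} (hm : Continuous m) (hm0 : 0 ≤ m 0)
    (hpos : ∀ t, 0 < t → 0 < m t) :
    ∃ l : I → ℝ, Continuous l ∧ StrictMono l ∧ l 0 = 0 ∧ ∀ t, l t ≤ m t := by
  let f : I → I → ℝ := fun t s => m s + max ((t : ℝ) - s) 0
  have hf : Continuous fun p : I × I => f p.1 p.2 := by fun_prop
  have hft (t : I) : Continuous (f t) := by fun_prop
  have hbdd (t : I) : BddBelow (range (f t)) := (isCompact_range (hft t)).bddBelow
  let F : I → ℝ := fun t => ⨅ s, f t s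
  have hF : Continuous F := by
    simpa only [image_univ, sInf_range] using isCompact_univ.continuous_sInf hf
  have hFmono : Monotone F := fun t t' h => ciInf_mono (hbdd t) fun s =>
    add_le_add_right (max_le_max_right _ (sub_le_sub_right (Subtype.coe_le_coe.2 h) _)) _
  have hFpos (t : I) (ht : 0 < t) : 0 < F t := by
    obtain ⟨s, -, hs⟩ := isCompact_univ.exists_sInf_image_eq univ_nonempty (hft t).continuousOn
    rw [image_univ, sInf_range] at hs
    change 0 < ⨅ s, f t s
    rw [hs]
    rcases eq_bot_or_bot_lt s with rfl | h0
    · exact add_pos_of_nonneg_of_pos hm0 (lt_max_of_lt_left (sub_pos.2 ht))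
    · exact add_pos_of_pos_of_nonneg (hpos s h0) (le_max_right _ _)
  refine ⟨fun t => F t * t, by fun_prop, fun t t' h => ?_, by simp, fun t => ?_⟩
  · have ht' : 0 < t' := t.2.1.trans_lt h
    calc F t * t ≤ F t' * t := mul_le_mul_of_nonneg_right (hFmono h.le) t.2.1
      _ < F t' * t' := mul_lt_mul_of_pos_left h (hFpos t' ht')
  · rcases eq_bot_or_bot_lt t with rfl | ht
    · simpa using! hm0
    · calc F t * t ≤ F t := mul_le_of_le_one_right (hFpos t ht).le t.2.2
        _ ≤ f t t := ciInf_le (hbdd t) t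
        _ = m t := by simp [f]

/-- An increasing function, from `0` up to the rise `η`, that stays within `m` of `0` before `T` and
within `m` of `η` after `T`. It is added to the heights along an arc to make them strictly
increasing, `m` being the distance to the arc that must not be crossed. -/
structure HeightTilt (m : I → ℝ) (T : I) (η : ℝ) (ρ : I → ℝ) : Prop where
  continuous : Continuous ρ
  strictMono : StrictMono ρ
  map_zero : ρ 0 = 0
  map_one : ρ 1 = η
  le (t : I) : t ≤ T → ρ t ≤ m t
  sub_le (t : I) : T ≤ t → η - ρ t ≤ m t

namespace HeightTilt

variable {m : I → ℝ} {T : I} {η : ℝ} {ρ : I → ℝ}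

lemma nonneg (h : HeightTilt m T η ρ) (t : I) : 0 ≤ ρ t :=
  h.map_zero.symm.trans_le (h.strictMono.monotone t.2.1)

lemma le_rise (h : HeightTilt m T η ρ) (t : I) : ρ t ≤ η :=
  (h.strictMono.monotone t.2.2).trans_eq h.map_one

lemma of_minorants {P Q : I → ℝ} (hP : Continuous P) (hQ : Continuous Q) (hPmono : StrictMono P)
    (hQanti : StrictAnti Q) (hP0 : P 0 = 0) (hQ1 : Q 1 = 0) (hPm : ∀ t ≤ T, P t ≤ m t)
    (hQm : ∀ t, T ≤ t → Q t ≤ m t) (hη : 0 < η) (hηP : η ≤ P T) (hηQ : η ≤ Q T) :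
    HeightTilt m T η fun t => η * (P t / (P t + Q t)) := by
  have hP_nonneg (t : I) : 0 ≤ P t := hP0.symm.trans_le (hPmono.monotone t.2.1)
  have hQ_nonneg (t : I) : 0 ≤ Q t := hQ1.symm.trans_le (hQanti.antitone t.2.2)
  have hη_le (t : I) (ht : t ≤ T) : η ≤ Q t := hηQ.trans (hQanti.antitone ht)
  have hη_le' (t : I) (ht : T ≤ t) : η ≤ P t := hηP.trans (hPmono.monotone ht)
  have hpos (t : I) : 0 < P t + Q t := by
    rcases le_total t T with ht | ht
    · linarith [hP_nonneg t, hη_le t ht]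
    · linarith [hQ_nonneg t, hη_le' t ht]
  refine ⟨?_, fun s t hst => ?_, by simp [hP0], ?_, fun t ht => ?_, fun t ht => ?_⟩
  · exact continuous_const.mul (hP.div (hP.add hQ) fun t => (hpos t).ne')
  · refine mul_lt_mul_of_pos_left ((div_lt_div_iff₀ (hpos s) (hpos t)).2 ?_) hη
    nlinarith [hPmono hst, hQanti hst, hP_nonneg s, hQ_nonneg t, hpos s, hpos t]
  · have := (hpos 1).ne'
    simp_all
  · refine le_trans ?_ (hPm t ht)
    rw [← mul_div_assoc, div_le_iff₀ (hpos t)]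
    nlinarith [hP_nonneg t, hη_le t ht]
  · refine le_trans ?_ (hQm t ht)
    have hsub : η - η * (P t / (P t + Q t)) = η * Q t / (P t + Q t) := by
      have := (hpos t).ne'
      field_simp
      ring
    rw [hsub, div_le_iff₀ (hpos t)]
    nlinarith [hQ_nonneg t, hη_le' t ht]

lemma exists_of_rise_le (hm : Continuous m) (hm0 : ∀ t, 0 ≤ m t) (hpos : ∀ t ∈ Ioo 0 1, 0 < m t)
    (hT : T ∈ Ioo 0 1) : ∃ η₀ > 0, ∀ η ∈ Ioc 0 η₀, ∃ ρ, HeightTilt m T η ρ := by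
  obtain ⟨P, hP, hPmono, hP0, hPm⟩ := exists_strictMono_le (m := fun t => m (min t T))
    (by fun_prop) (hm0 _) fun t ht => hpos _ ⟨lt_min ht hT.1, (min_le_right _ _).trans_lt hT.2⟩
  obtain ⟨Q, hQ, hQmono, hQ0, hQm⟩ := exists_strictMono_le (m := fun t => m (max (σ t) T))
    (by fun_prop) (hm0 _) fun t ht => hpos _
      ⟨hT.1.trans_le (le_max_right _ _), max_lt (unitInterval.symm_lt_comm.1 (by simpa)) hT.2⟩
  have hPT : 0 < P T := hP0.symm.trans_lt (hPmono hT.1)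
  have hσT : 0 < σ T := by simpa using unitInterval.symm_lt_symm.2 hT.2
  have hQT : 0 < Q (σ T) := hQ0.symm.trans_lt (hQmono hσT)
  refine ⟨min (P T) (Q (σ T)), lt_min hPT hQT, fun η hη => ⟨_, of_minorants (Q := Q ∘ σ) hP
    (by fun_prop) hPmono (hQmono.comp_strictAnti unitInterval.strictAnti_symm) hP0 (by simpa)
    (fun t ht => ?_) (fun t ht => ?_) hη.1 (hη.2.trans (min_le_left _ _))
    (hη.2.trans (min_le_right _ _))⟩⟩
  · simpa [min_eq_left ht] using hPm t
  · simpa [max_eq_left ht] using hQm (σ t)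

end HeightTilt

end HeightTilts

section MonotoneArcs

variable {X : Type*}

lemma exists_mem_Ioo_eq_add_div_two {f : I → ℝ} (hf : Continuous f) (hmono : Monotone f) :
    ∃ t ∈ Ioo 0 1, f t = (f 0 + f 1) / 2 := by
  rcases (hmono zero_le_one).eq_or_lt with h | h
  · obtain ⟨t, ht⟩ := exists_between (zero_lt_one : (0 : I) < 1)
    have h0 := hmono ht.1.le
    have h1 := hmono ht.2.le
    exact ⟨t, ht, by linarith⟩
  · obtain ⟨t, ht⟩ := mem_range_of_exists_le_of_exists_ge (c := (f 0 + f 1) / 2) hf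
      ⟨0, by linarith⟩ ⟨1, by linarith⟩
    exact ⟨t, ⟨hmono.reflect_lt (by linarith), hmono.reflect_lt (by linarith)⟩, ht⟩

/-- Two embedded arcs in `X × ℝ` that share both endpoints, are otherwise disjoint, and along which
the height weakly increases. Together they form a closed curve with a single rise and fall. -/
structure MonotoneArcs [TopologicalSpace X] (α β : I → X × ℝ) : Prop where
  continuous_left : Continuous α
  continuous_right : Continuous β
  injective_left : Function.Injective α
  injective_right : Function.Injective β
  map_zero : α 0 = β 0
  map_one : α 1 = β 1
  endpoints_of_eq (s t : I) : α s = β t → s = 0 ∧ t = 0 ∨ s = 1 ∧ t = 1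
  monotone_left : Monotone fun t => (α t).2
  monotone_right : Monotone fun t => (β t).2

namespace MonotoneArcs

protected lemma symm [TopologicalSpace X] {α β : I → X × ℝ} (h : MonotoneArcs α β) :
    MonotoneArcs β α where
  continuous_left := h.continuous_right
  continuous_right := h.continuous_left
  injective_left := h.injective_right
  injective_right := h.injective_left
  map_zero := h.map_zero.symm
  map_one := h.map_one.symm
  endpoints_of_eq s t hst := (h.endpoints_of_eq t s hst.symm).imp And.symm And.symm
  monotone_left := h.monotone_right
  monotone_right := h.monotone_left

variable [MetricSpace X] {α β : I → X × ℝ}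

lemma infDist_pos (h : MonotoneArcs α β) {t : I} (ht : t ∈ Ioo 0 1) :
    0 < Metric.infDist (α t) (range β) := by
  rw [← (isCompact_range h.continuous_right).isClosed.notMem_iff_infDist_pos (range_nonempty β)]
  rintro ⟨s, hs⟩
  rcases h.endpoints_of_eq t s hs.symm with ⟨rfl, -⟩ | ⟨rfl, -⟩
  · exact lt_irrefl _ ht.1
  · exact lt_irrefl _ ht.2

lemma exists_heightTilt (h : MonotoneArcs α β) {T : I} (hT : T ∈ Ioo 0 1) :
    ∃ η₀ > 0, ∀ η ∈ Ioc 0 η₀, ∃ ρ, HeightTilt (fun t => Metric.infDist (α t) (range β)) T η ρ :=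
  HeightTilt.exists_of_rise_le ((Metric.continuous_infDist_pt _).comp h.continuous_left)
    (fun _ => Metric.infDist_nonneg) (fun _ => h.infDist_pos) hT

lemma tilted_height_le_of_mem_left (h : MonotoneArcs α β) {ρ : I → ℝ} (hρ : Monotone ρ) {s t : I}
    (hfst : (α s).1 = (α t).1) (hsnd : (α s).2 ≤ (α t).2) : ρ s + (α s).2 ≤ ρ t + (α t).2 := by
  rcases hsnd.eq_or_lt with heq | hlt
  · rw [h.injective_left (Prod.ext hfst heq)]
  · exact add_le_add (hρ (h.monotone_left.reflect_lt hlt).le) hsnd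

lemma tilted_height_le (h : MonotoneArcs α β) {S T : I} (hST : (α S).2 = (β T).2) {η : ℝ}
    {ρ τ : I → ℝ} (hρ : HeightTilt (fun t => Metric.infDist (α t) (range β)) S η ρ)
    (hτ : HeightTilt (fun t => Metric.infDist (β t) (range α)) T η τ) {s t : I}
    (hfst : (α s).1 = (β t).1) (hsnd : (α s).2 ≤ (β t).2) : ρ s + (α s).2 ≤ τ t + (β t).2 := by
  rcases hsnd.eq_or_lt with heq | hlt
  · rcases h.endpoints_of_eq s t (Prod.ext hfst heq) with ⟨rfl, rfl⟩ | ⟨rfl, rfl⟩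
    · rw [hρ.map_zero, hτ.map_zero, heq]
    · rw [hρ.map_one, hτ.map_one, heq]
  have hdist : dist (α s) (β t) = (β t).2 - (α s).2 := by
    rw [Prod.dist_eq, hfst, dist_self, max_eq_right dist_nonneg, dist_comm, Real.dist_eq,
      abs_of_pos (sub_pos.2 hlt)]
  rcases le_total s S with hs | hs
  · have hρs := hρ.le s hs
    have hinf := Metric.infDist_le_dist_of_mem (x := α s) (mem_range_self (f := β) t)
    linarith [hτ.nonneg t]
  rcases le_total T t with ht | ht
  · have hτt := hτ.sub_le t ht
    have hinf := Metric.infDist_le_dist_of_mem (x := β t) (mem_range_self (f := α) s)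
    rw [dist_comm] at hinf
    linarith [hρ.le_rise s]
  · exact absurd (((h.monotone_right ht).trans_eq hST.symm).trans (h.monotone_left hs)) hlt.not_ge

lemma exists_tilts (h : MonotoneArcs α β) : ∃ ρ τ : I → ℝ, Continuous ρ ∧ Continuous τ ∧
    StrictMono ρ ∧ StrictMono τ ∧
    (∀ s t, (α s).1 = (β t).1 → (α s).2 ≤ (β t).2 → ρ s + (α s).2 ≤ τ t + (β t).2) ∧
    ∀ s t, (β s).1 = (α t).1 → (β s).2 ≤ (α t).2 → τ s + (β s).2 ≤ ρ t + (α t).2 := by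
  obtain ⟨S, hS, hSmid⟩ :=
    exists_mem_Ioo_eq_add_div_two (continuous_snd.comp h.continuous_left) h.monotone_left
  obtain ⟨T, hT, hTmid⟩ :=
    exists_mem_Ioo_eq_add_div_two (continuous_snd.comp h.continuous_right) h.monotone_right
  have hST : (α S).2 = (β T).2 := by
    simp only [Function.comp_apply] at hSmid hTmid
    rw [hSmid, hTmid, h.map_zero, h.map_one]
  obtain ⟨η₁, hη₁, hleft⟩ := h.exists_heightTilt hS
  obtain ⟨η₂, hη₂, hright⟩ := h.symm.exists_heightTilt hT
  obtain ⟨ρ, hρ⟩ := hleft (min η₁ η₂) ⟨lt_min hη₁ hη₂, min_le_left _ _⟩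
  obtain ⟨τ, hτ⟩ := hright (min η₁ η₂) ⟨lt_min hη₁ hη₂, min_le_right _ _⟩
  exact ⟨ρ, τ, hρ.continuous, hτ.continuous, hρ.strictMono, hτ.strictMono,
    fun s t => h.tilted_height_le hST hρ hτ, fun s t => h.symm.tilted_height_le hST.symm hτ hρ⟩

lemma exists_fiberwiseIncreasing (h : MonotoneArcs α β) :
    ∃ g : X × ℝ → ℝ, FiberwiseIncreasing g ∧ StrictMono (g ∘ α) ∧ StrictMono (g ∘ β) := by
  obtain ⟨ρ, τ, hρ, hτ, hρmono, hτmono, hαβ, hβα⟩ := h.exists_tilts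
  have hα := h.continuous_left
  have hβ := h.continuous_right
  obtain ⟨W, hW, hWmono, hWeq⟩ := exists_fiberwise_monotone_extension (κ := Sum.elim α β)
    (by fun_prop) (w := Sum.elim (fun t => ρ t + (α t).2) fun t => τ t + (β t).2) (by fun_prop) (by
      rintro (s | s) (t | t) hfst hsnd
      · exact h.tilted_height_le_of_mem_left hρmono.monotone hfst hsnd
      · exact hαβ s t hfst hsnd
      · exact hβα s t hfst hsnd
      · exact h.symm.tilted_height_le_of_mem_left hτmono.monotone hfst hsnd)
  have hWα (t : I) : W (α t) = ρ t + (α t).2 := hWeq (Sum.inl t)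
  have hWβ (t : I) : W (β t) = τ t + (β t).2 := hWeq (Sum.inr t)
  refine ⟨_, .of_monotone_add hW hWmono, fun s t hst => ?_, fun s t hst => ?_⟩
  · simp only [Function.comp_apply, hWα]
    linarith [hρmono hst, h.monotone_left hst.le]
  · simp only [Function.comp_apply, hWβ]
    linarith [hτmono hst, h.monotone_right hst.le]

lemma exists_fiberwiseIncreasing_normalized (h : MonotoneArcs α β) :
    ∃ g : X × ℝ → ℝ, FiberwiseIncreasing g ∧ StrictMono (g ∘ α) ∧ StrictMono (g ∘ β) ∧
      g (α 0) = 0 ∧ g (α 1) = 1 := by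
  obtain ⟨g, hg, hgα, hgβ⟩ := h.exists_fiberwiseIncreasing
  have hpos : 0 < g (α 1) - g (α 0) := sub_pos.2 (hgα zero_lt_one)
  have hinv : 0 < (g (α 1) - g (α 0))⁻¹ := inv_pos.2 hpos
  refine ⟨_, hg.affine hinv (-((g (α 1) - g (α 0))⁻¹ * g (α 0))),
    (hgα.const_mul hinv).add_const _, (hgβ.const_mul hinv).add_const _, by ring, ?_⟩
  rw [← sub_eq_add_neg, ← mul_sub, inv_mul_cancel₀ hpos.ne']

end MonotoneArcs

end MonotoneArcs

section TwoGraphs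

variable {X Y : Type*}

/-- The union of the graphs of `A` and `B` over the unit interval, drawn with the parameter as
height. -/
def twoGraphs (A B : ℝ → X) : Set (X × ℝ) :=
  (fun y => (A y, y)) '' Icc 0 1 ∪ (fun y => (B y, y)) '' Icc 0 1

lemma image_twoGraphs {A B : ℝ → X} {A' B' : ℝ → Y} {F : X × ℝ → Y × ℝ}
    (hA : ∀ y, F (A y, y) = (A' y, y)) (hB : ∀ y, F (B y, y) = (B' y, y)) :
    F '' twoGraphs A B = twoGraphs A' B' := by
  simp only [twoGraphs, image_union, image_image, hA, hB]

lemma exists_continuous_leftInverse_of_strictMono {f : I → ℝ} (hf : Continuous f)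
    (hmono : StrictMono f) (h0 : f 0 = 0) (h1 : f 1 = 1) :
    ∃ u : ℝ → I, Continuous u ∧ (∀ t, u (f t) = t) ∧ ∀ y, f (u y) = clamp y := by
  have hmem (t : I) : f t ∈ I :=
    ⟨h0.symm.trans_le (hmono.monotone t.2.1), (hmono.monotone t.2.2).trans_eq h1⟩
  have hsurj : Function.Surjective fun t => (⟨f t, hmem t⟩ : I) := by
    intro y
    obtain ⟨t, ht⟩ := mem_range_of_exists_le_of_exists_ge hf ⟨0, h0.trans_le y.2.1⟩
      ⟨1, y.2.2.trans_eq h1.symm⟩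
    exact ⟨t, Subtype.ext ht⟩
  let e : I ≃o I := StrictMono.orderIsoOfSurjective _ (fun s t hst => hmono hst) hsurj
  refine ⟨e.symm ∘ clamp, e.symm.continuous.comp continuous_projIcc, fun t => ?_, fun y => ?_⟩
  · have hclamp : clamp (f t) = ⟨f t, hmem t⟩ := projIcc_of_mem _ _
    rw [Function.comp_apply, hclamp]
    exact e.symm_apply_apply t
  · exact congrArg Subtype.val (e.apply_symm_apply (clamp y))

namespace FiberwiseIncreasing

variable [TopologicalSpace X] {g : X × ℝ → ℝ}

lemma injective (hg : FiberwiseIncreasing g) : Function.Injective fun p => (p.1, g p) := by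
  rintro ⟨x, y⟩ ⟨x', y'⟩ h
  obtain ⟨rfl, hy⟩ := Prod.mk.inj h
  exact Prod.ext rfl ((hg.strictMono x).injective hy)

end FiberwiseIncreasing

namespace MonotoneArcs

lemma map_height [TopologicalSpace X] {α β : I → X × ℝ} (h : MonotoneArcs α β) {g : X × ℝ → ℝ}
    (hg : FiberwiseIncreasing g) (hα : Monotone (g ∘ α)) (hβ : Monotone (g ∘ β)) :
    MonotoneArcs (fun t => ((α t).1, g (α t))) fun t => ((β t).1, g (β t)) where
  continuous_left := by have := hg.continuous; have := h.continuous_left; fun_prop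
  continuous_right := by have := hg.continuous; have := h.continuous_right; fun_prop
  injective_left := hg.injective.comp h.injective_left
  injective_right := hg.injective.comp h.injective_right
  map_zero := by rw [h.map_zero]
  map_one := by rw [h.map_one]
  endpoints_of_eq s t hst := h.endpoints_of_eq s t (hg.injective hst)
  monotone_left := hα
  monotone_right := hβ

lemma fst_eq_iff_of_snd_eq [TopologicalSpace X] {α β : I → X × ℝ} (h : MonotoneArcs α β)
    (hβ : StrictMono fun t => (β t).2) {s t : I} (hst : (α s).2 = (β t).2) :
    (α s).1 = (β t).1 ↔ s = 0 ∨ s = 1 := by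
  constructor
  · exact fun hfst => (h.endpoints_of_eq s t (Prod.ext hfst hst)).imp And.left And.left
  · rintro (rfl | rfl)
    · rw [h.map_zero, hβ.injective (hst.symm.trans (congrArg Prod.snd h.map_zero))]
    · rw [h.map_one, hβ.injective (hst.symm.trans (congrArg Prod.snd h.map_one))]

lemma exists_eq_twoGraphs [TopologicalSpace X] {α β : I → X × ℝ} (h : MonotoneArcs α β)
    (hα : StrictMono fun t => (α t).2) (hβ : StrictMono fun t => (β t).2) (h0 : (α 0).2 = 0)
    (h1 : (α 1).2 = 1) : ∃ A B : ℝ → X, Continuous A ∧ Continuous B ∧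
      (∀ y, A y ≠ B y ↔ y ∈ Ioo 0 1) ∧ range α ∪ range β = twoGraphs A B := by
  have hcα := h.continuous_left
  have hcβ := h.continuous_right
  obtain ⟨u, hu, hleft, hright⟩ :=
    exists_continuous_leftInverse_of_strictMono (by fun_prop) hα h0 h1
  obtain ⟨v, hv, hleft', hright'⟩ := exists_continuous_leftInverse_of_strictMono (by fun_prop) hβ
    ((congrArg Prod.snd h.map_zero).symm.trans h0) ((congrArg Prod.snd h.map_one).symm.trans h1)
  have range_eq {γ : I → X × ℝ} {w : ℝ → I} (hleft : ∀ t, w (γ t).2 = t)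
      (hright : ∀ y, (γ (w y)).2 = clamp y) : range γ = (fun y => ((γ (w y)).1, y)) '' Icc 0 1 := by
    refine Subset.antisymm ?_ ?_
    · rintro _ ⟨t, rfl⟩
      exact ⟨(γ t).2, by rw [← hleft t, hright]; exact Subtype.coe_prop _, by simp only [hleft]⟩
    · rintro _ ⟨y, hy, rfl⟩
      exact ⟨w y, Prod.ext rfl ((hright y).trans (congrArg Subtype.val (projIcc_of_mem _ hy)))⟩
  refine ⟨fun y => (α (u y)).1, fun y => (β (v y)).1, by fun_prop, by fun_prop, fun y => ?_,
    congrArg₂ _ (range_eq hleft hright) (range_eq hleft' hright')⟩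
  have hheight : (α (u y)).2 = (β (v y)).2 := (hright y).trans (hright' y).symm
  rw [Ne, h.fst_eq_iff_of_snd_eq hβ hheight, ← hα.injective.eq_iff (a := u y),
    ← hα.injective.eq_iff (a := u y), hright, h0, h1, coe_clamp_eq_zero, coe_clamp_eq_one,
    not_or, not_le, not_le, mem_Ioo]

lemma exists_ambientIsotopic_twoGraphs {V : Type*} [NormedAddCommGroup V] [NormedSpace ℝ V]
    {α β : I → V × ℝ} (h : MonotoneArcs α β) :
    ∃ D : ℝ → V, Continuous D ∧ Function.support D = Ioo 0 1 ∧
      AmbientIsotopic (range α ∪ range β) (twoGraphs 0 D) := by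
  obtain ⟨g, hg, hgα, hgβ, hg0, hg1⟩ := h.exists_fiberwiseIncreasing_normalized
  obtain ⟨A, B, hA, hB, hne, hgraphs⟩ :=
    (h.map_height hg hgα.monotone hgβ.monotone).exists_eq_twoGraphs hgα hgβ hg0 hg1
  have hvertical := hg.ambientIsotopic (range α ∪ range β)
  rw [image_union, ← range_comp, ← range_comp, Function.comp_def, Function.comp_def, hgraphs]
    at hvertical
  have htranslate := AmbientIsotopic.translate hA.neg (twoGraphs A B)
  rw [image_twoGraphs (A' := 0) (B' := B - A) (fun y => by simp) fun y => by simp [sub_eq_add_neg]]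
    at htranslate
  refine ⟨B - A, hB.sub hA, ?_, hvertical.trans htranslate⟩
  ext y
  rw [Function.mem_support, Pi.sub_apply, sub_ne_zero, ← hne, ne_comm]

end MonotoneArcs

end TwoGraphs

section Untwisting

lemma support_norm {ι E : Type*} [NormedAddCommGroup E] (f : ι → E) :
    (Function.support fun i => ‖f i‖) = Function.support f :=
  Function.support_comp_eq _ norm_eq_zero f

variable {Y : Type*} [TopologicalSpace Y]

lemma AmbientIsotopic.twist {φ : ℝ × Y → ℝ} (hφ : ∀ r > 0, ∀ y, ContinuousAt φ (r, y))
    (A : Set (ℂ × Y)) :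
    AmbientIsotopic A ((fun p => (p.1 * Complex.exp (φ (‖p.1‖, p.2) * Complex.I), p.2)) '' A) := by
  have hcont {Z : Type _} [TopologicalSpace Z] {c : Z → ℝ} {w : Z → ℂ} {y : Z → Y}
      (hc : Continuous c) (hw : Continuous w) (hy : Continuous y) : Continuous fun z =>
        (w z * Complex.exp ((c z * φ (‖w z‖, y z) : ℝ) * Complex.I), y z) := by
    refine (continuous_mul_of_norm_le_one hw (fun z hz => ?_) fun z => ?_).prodMk hy
    · have hφz := (hφ ‖w z‖ (norm_pos_iff.2 hz) (y z)).comp (f := fun z => (‖w z‖, y z))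
        (by fun_prop)
      have hangle := Complex.continuous_ofReal.continuousAt.comp (hc.continuousAt.mul hφz)
      exact (hangle.mul continuousAt_const).cexp
    · exact (Complex.norm_exp_ofReal_mul_I _).le
  have hcancel (w : ℂ) (s : ℝ) :
      w * Complex.exp (s * Complex.I) * Complex.exp ((-s : ℝ) * Complex.I) = w := by
    rw [mul_assoc, ← Complex.exp_add, Complex.ofReal_neg, neg_mul, add_neg_cancel, Complex.exp_zero,
      mul_one]
  refine ⟨fun t =>
    { toFun := fun p => (p.1 * Complex.exp ((t * φ (‖p.1‖, p.2) : ℝ) * Complex.I), p.2)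
      invFun := fun p => (p.1 * Complex.exp ((-t * φ (‖p.1‖, p.2) : ℝ) * Complex.I), p.2)
      left_inv := fun p => ?_
      right_inv := fun p => ?_
      continuous_toFun := hcont continuous_const continuous_fst continuous_snd
      continuous_invFun := hcont continuous_const continuous_fst continuous_snd }, ?_, ?_, ?_, ?_⟩
  · simp only [norm_mul, Complex.norm_exp_ofReal_mul_I, mul_one, neg_mul, hcancel]
  · simp only [norm_mul, Complex.norm_exp_ofReal_mul_I, mul_one]
    nth_rw 2 [← neg_neg (t : ℝ)]
    simp only [neg_mul _ (φ _), hcancel]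
  · exact hcont (by fun_prop) (by fun_prop) (by fun_prop)
  · exact hcont (by fun_prop) (by fun_prop) (by fun_prop)
  · ext p <;> simp
  · simp

-- The angle `θ` may oscillate where `ρ` vanishes, so it is cut off at radius `2ρ`: the twist by it
-- is then continuous away from the axis and still acts fully at radius `ρ`.
lemma continuousAt_mul_clamp {θ ρ : Y → ℝ} (hρ : Continuous ρ) (hρ0 : ∀ y, 0 ≤ ρ y)
    (hθ : ContinuousOn θ (Function.support ρ)) {r : ℝ} (hr : 0 < r) (y : Y) :
    ContinuousAt (fun p : ℝ × Y => θ p.2 * clamp ((2 * ρ p.2 - p.1) / ρ p.2)) (r, y) := by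
  by_cases hy : ρ y = 0
  · have hev : ∀ᶠ p : ℝ × Y in 𝓝 (r, y), 2 * ρ p.2 < p.1 :=
      (isOpen_lt (by fun_prop) continuous_fst).mem_nhds (by simpa [hy])
    refine (continuousAt_const (y := (0 : ℝ))).congr ?_
    filter_upwards [hev] with p hp
    rw [coe_clamp_eq_zero.2 (div_nonpos_of_nonpos_of_nonneg (by linarith) (hρ0 _)), mul_zero]
  · have hθy : ContinuousAt θ y := hθ.continuousAt (hρ.isOpen_support.mem_nhds hy)
    have hθ' := hθy.comp_of_eq (f := Prod.snd) (x := (r, y)) continuousAt_snd rfl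
    have hquot : ContinuousAt (fun p : ℝ × Y => (2 * ρ p.2 - p.1) / ρ p.2) (r, y) := by
      fun_prop (disch := exact hy)
    exact hθ'.mul ((continuous_subtype_val.comp continuous_projIcc).continuousAt.comp hquot)

lemma AmbientIsotopic.twoGraphs_norm {D : ℝ → ℂ} (hD : Continuous D)
    (hsupp : IsSimplyConnected (Function.support D)) :
    AmbientIsotopic (twoGraphs 0 D) (twoGraphs 0 fun y => (‖D y‖ : ℂ)) := by
  obtain ⟨L, hL, hexp⟩ := Complex.exists_continuousOn_eqOn_exp_comp hsupp hD.isOpen_support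
    hD.continuousOn (by rintro ⟨y, hy, h⟩; exact hy h)
  have hθ : ContinuousOn (fun y => -(L y).im) (Function.support fun y => ‖D y‖) := by
    rw [support_norm]
    exact (Complex.continuous_im.comp_continuousOn hL).neg
  have htwist := AmbientIsotopic.twist (fun r hr => continuousAt_mul_clamp hD.norm
    (fun y => norm_nonneg (D y)) hθ hr) (twoGraphs 0 D)
  rwa [image_twoGraphs (A' := 0) (B' := fun y => (‖D y‖ : ℂ)) (fun y => by simp) fun y => ?_]
    at htwist
  by_cases hy : D y = 0
  · simp [hy]
  · have hclamp : (clamp ((2 * ‖D y‖ - ‖D y‖) / ‖D y‖) : ℝ) = 1 := by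
      rw [two_mul, add_sub_cancel_right, div_self (norm_ne_zero_iff.2 hy)]
      exact coe_clamp_eq_one.2 le_rfl
    have hpolar : D y * Complex.exp ((-(L y).im : ℝ) * Complex.I) = ‖D y‖ := by
      rw [← hexp hy, Function.comp_apply, Complex.norm_exp, ← Complex.exp_add, Complex.ofReal_exp]
      congr 1
      apply Complex.ext <;> simp
    rw [hclamp, mul_one, hpolar]

end Untwisting

section Rescaling

variable {Y : Type*} [TopologicalSpace Y] {r r' : Y → ℝ}

lemma FiberwiseIncreasing.rescale (hr : Continuous r) (hr' : Continuous r') (hr0 : ∀ y, 0 ≤ r y)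
    (hr'0 : ∀ y, 0 ≤ r' y) (hsupp : Function.support r = Function.support r') :
    FiberwiseIncreasing fun p : Y × ℝ => p.2 + (r' p.1 - r p.1) * clamp (p.2 / r p.1) := by
  have hzero (y : Y) : r y = 0 ↔ r' y = 0 := by
    simpa only [Function.mem_support, not_iff_not] using Set.ext_iff.1 hsupp y
  refine .of_abs_sub_le (C := fun y => |r' y - r y|) ?_ (fun y a b hab => ?_) fun y x => ?_
  · refine continuous_snd.add (continuous_mul_of_norm_le_one (by fun_prop) (fun p hp => ?_) fun p =>
      norm_clamp_le_one _)
    have hne : r p.1 ≠ 0 := fun h => hp (by rw [h, (hzero _).1 h, sub_zero])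
    have hquot : ContinuousAt (fun p : Y × ℝ => p.2 / r p.1) p := by fun_prop (disch := exact hne)
    exact (continuous_subtype_val.comp continuous_projIcc).continuousAt.comp hquot
  · rcases (hr0 y).eq_or_lt with h0 | hpos
    · simpa only [(hzero y).1 h0.symm, h0.symm, sub_zero, zero_mul, add_zero]
    have hpos' : 0 < r' y := (hr'0 y).lt_of_ne' fun h => hpos.ne' ((hzero y).2 h)
    rcases (clamp_div_mono hpos.le hab.le).eq_or_lt with heq | hlt
    · simpa only [heq, add_lt_add_iff_right]
    have hgap : r y * clamp (b / r y) - r y * clamp (a / r y) ≤ b - a := by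
      rw [mul_clamp_div hpos, mul_clamp_div hpos]
      grind
    have hgain := mul_lt_mul_of_pos_left (Subtype.coe_lt_coe.2 hlt) hpos'
    linarith
  · rw [add_sub_cancel_left, abs_mul]
    exact mul_le_of_le_one_right (abs_nonneg _) (norm_clamp_le_one _)

lemma AmbientIsotopic.twoGraphs_rescale {r r' : ℝ → ℝ} (hr : Continuous r) (hr' : Continuous r')
    (hr0 : ∀ y, 0 ≤ r y) (hr'0 : ∀ y, 0 ≤ r' y)
    (hsupp : Function.support r = Function.support r') :
    AmbientIsotopic (twoGraphs 0 fun y => (r y : ℂ)) (twoGraphs 0 fun y => (r' y : ℂ)) := by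
  let e : ℂ × ℝ ≃ₜ (ℝ × ℝ) × ℝ :=
    { toFun := fun p => ((p.1.im, p.2), p.1.re)
      invFun := fun p => (Complex.equivRealProdCLM.symm (p.2, p.1.1), p.1.2)
      left_inv := fun p => rfl
      right_inv := fun p => rfl
      continuous_toFun := by fun_prop
      continuous_invFun := by fun_prop }
  have he (x y : ℝ) : e ((x : ℂ), y) = ((0, y), x) := rfl
  have he0 (y : ℝ) : e (0, y) = ((0, y), 0) := rfl
  have hg := FiberwiseIncreasing.rescale (Y := ℝ × ℝ) (r := fun q => r q.2) (r' := fun q => r' q.2)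
    (by fun_prop) (by fun_prop) (fun q => hr0 q.2) (fun q => hr'0 q.2)
    (congrArg (Prod.snd ⁻¹' ·) hsupp)
  refine .of_image e ?_
  convert hg.ambientIsotopic (e '' twoGraphs 0 fun y => (r y : ℂ)) using 1
  simp only [twoGraphs, image_union, image_image, Pi.zero_apply, he, he0]
  refine congrArg₂ _ (image_congr fun y _ => ?_) (image_congr fun y _ => ?_)
  · rw [zero_div, coe_clamp_eq_zero.2 le_rfl, mul_zero, add_zero]
  · by_cases hy : r y = 0
    · have hy' : r' y = 0 := Function.notMem_support.1 (hsupp ▸ Function.notMem_support.2 hy)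
      rw [hy, hy', sub_zero, zero_mul, add_zero]
    · rw [div_self hy, coe_clamp_eq_one.2 le_rfl, mul_one, add_sub_cancel]

end Rescaling

lemma MonotoneArcs.ambientIsotopic {α β α' β' : I → ℂ × ℝ} (h : MonotoneArcs α β)
    (h' : MonotoneArcs α' β') :
    AmbientIsotopic (range α ∪ range β) (range α' ∪ range β') := by
  obtain ⟨D, hD, hsupp, hiso⟩ := h.exists_ambientIsotopic_twoGraphs
  obtain ⟨D', hD', hsupp', hiso'⟩ := h'.exists_ambientIsotopic_twoGraphs
  have hsc : IsSimplyConnected (Ioo (0 : ℝ) 1) :=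
    have := (convex_Ioo (0 : ℝ) 1).contractibleSpace (nonempty_Ioo.2 zero_lt_one)
    SimplyConnectedSpace.ofContractible _
  have hscale := AmbientIsotopic.twoGraphs_rescale hD.norm hD'.norm (fun y => norm_nonneg (D y))
    (fun y => norm_nonneg (D' y))
    (by rw [support_norm, support_norm, hsupp, hsupp'])
  exact (hiso.trans (.twoGraphs_norm hD (hsupp ▸ hsc))).trans <|
    hscale.trans (hiso'.trans (.twoGraphs_norm hD' (hsupp' ▸ hsc))).symm

section CircleArc

/-- The arc of the circle `ℝ/ℤ` whose parameter runs linearly from `c` to `d`, in either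
direction. -/
def circleArc (c d : ℝ) (t : I) : AddCircle (1 : ℝ) := (AffineMap.lineMap c d (t : ℝ) : ℝ)

variable {a b c d : ℝ}

lemma continuous_circleArc : Continuous (circleArc c d) :=
  (AddCircle.continuous_mk' 1).comp (AffineMap.lineMap_continuous.comp continuous_subtype_val)

lemma circleArc_zero : circleArc c d 0 = (c : ℝ) := by simp [circleArc]

lemma circleArc_one : circleArc c d 1 = (d : ℝ) := by simp [circleArc]

lemma lineMap_mem_uIcc (c d : ℝ) (t : I) : AffineMap.lineMap c d (t : ℝ) ∈ uIcc c d :=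
  segment_eq_uIcc c d ▸ segment_eq_image_lineMap ℝ c d ▸ mem_image_of_mem _ t.2

lemma range_circleArc : range (circleArc c d) = (↑) '' uIcc c d := by
  rw [← segment_eq_uIcc, segment_eq_image_lineMap, image_image, image_eq_range]
  rfl

lemma circleArc_injective (hne : c ≠ d) (hlt : |d - c| < 1) :
    Function.Injective (circleArc c d) := by
  have hmem (t : I) : AffineMap.lineMap c d (t : ℝ) ∈ Ico (min c d) (min c d + 1) := by
    refine ⟨(lineMap_mem_uIcc c d t).1, (lineMap_mem_uIcc c d t).2.trans_lt ?_⟩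
    linarith [max_sub_min_eq_abs c d]
  intro s t hst
  exact Subtype.ext (AffineMap.lineMap_injective ℝ hne
    ((AddCircle.coe_eq_coe_iff_of_mem_Ico (hmem s) (hmem t)).1 hst))

lemma endpoints_of_circleArc_eq (hba : b < a) (hab : a < b + 1) {s t : I}
    (hst : circleArc b a s = circleArc (b + 1) a t) : s = 0 ∧ t = 0 ∨ s = 1 ∧ t = 1 := by
  have hx := uIcc_of_le hba.le ▸ lineMap_mem_uIcc b a s
  have hy := uIcc_of_ge hab.le ▸ lineMap_mem_uIcc (b + 1) a t
  have hs_inj := circleArc_injective hba.ne (by rw [abs_of_pos] <;> linarith)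
  have ht_inj := circleArc_injective hab.ne' (by rw [abs_of_neg] <;> linarith)
  rcases hy.2.eq_or_lt with hytop | hytop
  · have ht : circleArc (b + 1) a t = b := by rw [circleArc, hytop, AddCircle.coe_add_period]
    refine .inl ⟨hs_inj ?_, ht_inj ?_⟩
    · rw [hst, ht, circleArc_zero]
    · rw [ht, circleArc_zero, AddCircle.coe_add_period]
  · have hxy := (AddCircle.coe_eq_coe_iff_of_mem_Ico ⟨hx.1, hx.2.trans_lt hab⟩
      ⟨hba.le.trans hy.1, hytop⟩).1 hst
    have hs : circleArc b a s = a := congrArg _ (hx.2.antisymm (hxy ▸ hy.1))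
    refine .inr ⟨hs_inj ?_, ht_inj ?_⟩
    · rw [hs, circleArc_one]
    · rw [← hst, hs, circleArc_one]

lemma range_circleArc_union (hba : b ≤ a) (hab : a ≤ b + 1) :
    range (circleArc b a) ∪ range (circleArc (b + 1) a) = univ := by
  rw [range_circleArc, range_circleArc, uIcc_of_le hba, uIcc_of_ge hab, ← image_union,
    Icc_union_Icc_eq_Icc hba hab, AddCircle.coe_image_Icc_eq]

end CircleArc

section Unimodal

/-- A function on the circle `ℝ/ℤ` is unimodal if it weakly increases along one arc and weakly
decreases along the complementary one. -/
def IsUnimodal (F : AddCircle (1 : ℝ) → ℝ) : Prop :=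
  ∃ b a : ℝ, b < a ∧ a < b + 1 ∧ MonotoneOn (fun t : ℝ => F t) (Icc b a) ∧
    AntitoneOn (fun t : ℝ => F t) (Icc a (b + 1))

namespace IsUnimodal

lemma exists_monotoneArcs {X : Type*} [TopologicalSpace X]
    {κ : AddCircle (1 : ℝ) → X × ℝ} (hκ : Continuous κ) (hinj : Function.Injective κ)
    (h : IsUnimodal fun z => (κ z).2) :
    ∃ α β, MonotoneArcs α β ∧ range α ∪ range β = range κ := by
  obtain ⟨b, a, hba, hab, hmono, hanti⟩ := h
  refine ⟨κ ∘ circleArc b a, κ ∘ circleArc (b + 1) a, ?_, ?_⟩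
  · exact
    { continuous_left := hκ.comp continuous_circleArc
      continuous_right := hκ.comp continuous_circleArc
      injective_left := hinj.comp (circleArc_injective hba.ne (by rw [abs_of_pos] <;> linarith))
      injective_right := hinj.comp (circleArc_injective hab.ne' (by rw [abs_of_neg] <;> linarith))
      map_zero := by simp only [Function.comp_apply, circleArc_zero, AddCircle.coe_add_period]
      map_one := by simp only [Function.comp_apply, circleArc_one]
      endpoints_of_eq := fun s t hst => endpoints_of_circleArc_eq hba hab (hinj hst)
      monotone_left := fun s t hst => hmono (uIcc_of_le hba.le ▸ lineMap_mem_uIcc b a s)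
        (uIcc_of_le hba.le ▸ lineMap_mem_uIcc b a t) (AffineMap.lineMap_mono hba.le hst)
      monotone_right := fun s t hst => hanti (uIcc_of_ge hab.le ▸ lineMap_mem_uIcc (b + 1) a t)
        (uIcc_of_ge hab.le ▸ lineMap_mem_uIcc (b + 1) a s) (AffineMap.lineMap_anti hab.le hst) }
  · rw [range_comp, range_comp, ← image_union, range_circleArc_union hba.le hab.le, image_univ]

lemma ambientIsotopic {κ κ' : AddCircle (1 : ℝ) → ℂ × ℝ} (hκ : Continuous κ)
    (hinj : Function.Injective κ) (h : IsUnimodal fun z => (κ z).2) (hκ' : Continuous κ')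
    (hinj' : Function.Injective κ') (h' : IsUnimodal fun z => (κ' z).2) :
    AmbientIsotopic (range κ) (range κ') := by
  obtain ⟨α, β, harcs, hrange⟩ := h.exists_monotoneArcs hκ hinj
  obtain ⟨α', β', harcs', hrange'⟩ := h'.exists_monotoneArcs hκ' hinj'
  exact hrange ▸ hrange' ▸ harcs.ambientIsotopic harcs'

end IsUnimodal

end Unimodal

section Alternating

variable {F : AddCircle (1 : ℝ) → ℝ} {a b c d : ℝ}

/-- Four cyclically ordered parameters on `ℝ/ℤ` at which `F` zigzags: consecutive increments of
`F`, taken cyclically, have opposite signs. -/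
structure IsAlternating (F : AddCircle (1 : ℝ) → ℝ) (a b c d : ℝ) : Prop where
  lt_second : a < b
  lt_third : b < c
  lt_fourth : c < d
  lt_add_one : d < a + 1
  turn_second : (F b - F a) * (F c - F b) < 0
  turn_third : (F c - F b) * (F d - F c) < 0
  turn_fourth : (F d - F c) * (F a - F d) < 0
  turn_first : (F a - F d) * (F b - F a) < 0

namespace IsAlternating

lemma of_peaks (hab : a < b) (hbc : b < c) (hcd : c < d) (hda : d < a + 1)
    (h₁ : F a < F b) (h₂ : F c < F b) (h₃ : F c < F d) (h₄ : F a < F d) :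
    IsAlternating F a b c d :=
  ⟨hab, hbc, hcd, hda, mul_neg_of_pos_of_neg (sub_pos.2 h₁) (sub_neg.2 h₂),
    mul_neg_of_neg_of_pos (sub_neg.2 h₂) (sub_pos.2 h₃),
    mul_neg_of_pos_of_neg (sub_pos.2 h₃) (sub_neg.2 h₄),
    mul_neg_of_neg_of_pos (sub_neg.2 h₄) (sub_pos.2 h₁)⟩

lemma sub_int (h : IsAlternating F a b c d) (n : ℤ) :
    IsAlternating F (a - n) (b - n) (c - n) (d - n) := by
  have hF (t : ℝ) : F ((t - n : ℝ) : AddCircle (1 : ℝ)) = F t := by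
    rw [AddCircle.coe_sub, (AddCircle.coe_eq_zero_iff (x := (n : ℝ)) 1).2 ⟨n, by simp⟩, sub_zero]
  refine ⟨by linarith [h.lt_second], by linarith [h.lt_third], by linarith [h.lt_fourth],
    by linarith [h.lt_add_one], ?_, ?_, ?_, ?_⟩ <;> simp only [hF]
  exacts [h.turn_second, h.turn_third, h.turn_fourth, h.turn_first]

lemma rotate (h : IsAlternating F a b c d) : IsAlternating F (d - 1) a b c := by
  have hF : F ((d - 1 : ℝ) : AddCircle (1 : ℝ)) = F d := by
    rw [AddCircle.coe_sub, AddCircle.coe_period, sub_zero]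
  refine ⟨by linarith [h.lt_add_one], h.lt_second, h.lt_third, by linarith [h.lt_fourth],
    ?_, h.turn_second, ?_, ?_⟩ <;> rw [hF]
  exacts [h.turn_first, h.turn_third, h.turn_fourth]

lemma exists_mem_Ico (h : IsAlternating F a b c d) :
    ∃ a' b' c' d', 0 ≤ a' ∧ d' < 1 ∧ IsAlternating F a' b' c' d' := by
  wlog ha : a ∈ Ico (0 : ℝ) 1 generalizing a b c d
  · exact this (h.sub_int ⌊a⌋) ⟨Int.fract_nonneg a, Int.fract_lt_one a⟩
  have h₁ := h.rotate
  have h₂ := h₁.rotate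
  rcases lt_or_ge d 1 with hd | hd
  · exact ⟨a, b, c, d, ha.1, hd, h⟩
  rcases lt_or_ge c 1 with hc | hc
  · exact ⟨_, _, _, _, sub_nonneg.2 hd, hc, h₁⟩
  rcases lt_or_ge b 1 with hb | hb
  · exact ⟨_, _, _, _, sub_nonneg.2 hc, hb, h₂⟩
  · exact ⟨_, _, _, _, sub_nonneg.2 hb, ha.2, h₂.rotate⟩

end IsAlternating

lemma angle_eq_pi_of_mul_neg {x y : ℝ} (h : x * y < 0) :
    InnerProductGeometry.angle x y = Real.pi := by
  have hx : x ≠ 0 := left_ne_zero_of_mul h.ne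
  exact InnerProductGeometry.angle_eq_pi_iff.2
    ⟨hx, x * y / (x * x), div_neg_of_neg_of_pos h (mul_self_pos.2 hx), 
      by rw [smul_eq_mul]; field_simp⟩

lemma turnSum_quadrilateral {p q r s : ℝ} (hq : (q - p) * (r - q) < 0)
    (hr : (r - q) * (s - r) < 0) (hs : (s - r) * (p - s) < 0) (hp : (p - s) * (q - p) < 0) :
    turnSum (cyclicCollapse [p, q, r, s] ++ (cyclicCollapse [p, q, r, s]).take 2) =
      4 * Real.pi := by
  have hpq : p ≠ q := (sub_ne_zero.1 (left_ne_zero_of_mul hq.ne)).symm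
  have hqr : q ≠ r := (sub_ne_zero.1 (left_ne_zero_of_mul hr.ne)).symm
  have hrs : r ≠ s := (sub_ne_zero.1 (left_ne_zero_of_mul hs.ne)).symm
  have hsp : s ≠ p := (sub_ne_zero.1 (left_ne_zero_of_mul hp.ne)).symm
  have hcollapse : collapse [p, q, r, s] = [p, q, r, s] := by simp [collapse, hpq, hqr, hrs]
  have hcyclic : cyclicCollapse [p, q, r, s] = [p, q, r, s] := by
    rw [cyclicCollapse, hcollapse]
    simp [hsp]
  simp only [hcyclic, List.take, List.cons_append, List.nil_append, turnSum,
    angle_eq_pi_of_mul_neg hq, angle_eq_pi_of_mul_neg hr, angle_eq_pi_of_mul_neg hs,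
    angle_eq_pi_of_mul_neg hp]
  ring

lemma IsAlternating.four_pi_le_loopTC (h : IsAlternating F a b c d) :
    ENNReal.ofReal (4 * Real.pi) ≤ loopTC F := by
  obtain ⟨a, b, c, d, ha, hd, h⟩ := h.exists_mem_Ico
  let u (i : ℕ) : ℝ := if i = 0 then a else if i = 1 then b else if i = 2 then c else d
  have hu : LoopInscribed 3 u := by
    have := h.lt_second; have := h.lt_third; have := h.lt_fourth
    constructor <;> intro i hi <;> interval_cases i <;> simp only [u] <;> norm_num <;>
      grind
  have hvertices : loopVertexList F 3 u = [F a, F b, F c, F d] := by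
    simp [loopVertexList, u, List.range_succ]
  have hturn : loopPolyTC F 3 u = 4 * Real.pi := by
    rw [loopPolyTC, hvertices]
    exact turnSum_quadrilateral h.turn_second h.turn_third h.turn_fourth h.turn_first
  exact hturn ▸ le_iSup_of_le 3 (le_iSup₂_of_le u hu le_rfl)

lemma isUnimodal_of_forall_not_isAlternating (hF : Continuous F)
    (h : ∀ a b c d, ¬ IsAlternating F a b c d) : IsUnimodal F := by
  obtain ⟨zmin, -, hmin⟩ := isCompact_univ.exists_isMinOn univ_nonempty hF.continuousOn
  obtain ⟨zmax, -, hmax⟩ := isCompact_univ.exists_isMaxOn univ_nonempty hF.continuousOn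
  obtain ⟨b, rfl⟩ := QuotientAddGroup.mk_surjective zmin
  obtain ⟨a, ha, rfl⟩ : zmax ∈ ((↑) : ℝ → AddCircle (1 : ℝ)) '' Ico b (b + 1) :=
    AddCircle.coe_image_Ico_eq (1 : ℝ) b ▸ mem_univ zmax
  replace hmin (t : ℝ) : F b ≤ F t := hmin (mem_univ _)
  replace hmax (t : ℝ) : F t ≤ F a := hmax (mem_univ _)
  have hne {x y : ℝ} (hxy : F x < F y) : x ≠ y := ne_of_apply_ne (fun t : ℝ => F t) hxy.ne
  rcases (hmin a).eq_or_lt with hconst | hlt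
  · have hF' (s t : ℝ) : F s = F t :=
      (((hmax s).trans hconst.ge).trans (hmin t)).antisymm
        (((hmax t).trans hconst.ge).trans (hmin s))
    exact ⟨b, b + 1 / 2, by linarith, by linarith, fun s _ t _ _ => (hF' s t).le,
      fun s _ t _ _ => (hF' t s).le⟩
  have hba : b < a := ha.1.lt_of_ne (hne hlt)
  refine ⟨b, a, hba, ha.2, fun x hx y hy hxy => ?_, fun x hx y hy hxy => ?_⟩ <;> by_contra! hlt'
  · have hbx := (hmin y).trans_lt hlt'
    have hya := hlt'.trans_le (hmax x)
    exact h b x y a (.of_peaks (hx.1.lt_of_ne (hne hbx)) (hxy.lt_of_ne (hne hlt').symm)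
      (hy.2.lt_of_ne (hne hya)) ha.2 hbx hlt' hya hlt)
  · have hby := (hmin x).trans_lt hlt'
    have hxa := hlt'.trans_le (hmax y)
    have hyb : y < b + 1 := hy.2.lt_of_ne fun hyb => by
      rw [hyb, AddCircle.coe_add_period] at hby
      exact hby.false
    exact h b a x y (.of_peaks hba (hx.1.lt_of_ne (hne hxa).symm) (hxy.lt_of_ne (hne hlt')) hyb
      hlt hxa hlt' hby)

end Alternating

section RoundCircle

/-- The unit circle of the `xy`-plane in `ℝ³`, parametrized by `ℝ/ℤ` at constant speed. -/
noncomputable def roundCircle (z : AddCircle (1 : ℝ)) : EuclideanSpace ℝ (Fin 3) :=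
  !₂[(z.toCircle : ℂ).re, (z.toCircle : ℂ).im, 0]

lemma roundCircle_coe (t : ℝ) :
    roundCircle t = !₂[Real.cos (2 * Real.pi * t), Real.sin (2 * Real.pi * t), 0] := by
  rw [roundCircle, AddCircle.toCircle_apply_mk, Circle.coe_exp, Complex.exp_ofReal_mul_I_re,
    Complex.exp_ofReal_mul_I_im, div_one]

lemma continuous_roundCircle : Continuous roundCircle := by
  have := AddCircle.continuous_toCircle (T := 1)
  refine (PiLp.continuous_toLp 2 _).comp (continuous_pi fun i => ?_)
  fin_cases i
  exacts [Complex.continuous_re.comp (continuous_subtype_val.comp this),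
    Complex.continuous_im.comp (continuous_subtype_val.comp this), continuous_const]

lemma roundCircle_injective : Function.Injective roundCircle := fun _ _ h =>
  AddCircle.injective_toCircle one_ne_zero <| Circle.ext <| Complex.ext
    (congrArg (fun p : EuclideanSpace ℝ (Fin 3) => p 0) h)
    (congrArg (fun p : EuclideanSpace ℝ (Fin 3) => p 1) h)

lemma range_roundCircle : range roundCircle = {p | p 0 ^ 2 + p 1 ^ 2 = 1 ∧ p 2 = 0} := by
  ext p
  constructor
  · rintro ⟨z, rfl⟩
    have := Circle.normSq_coe z.toCircle
    rw [Complex.normSq_apply] at this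
    exact ⟨by simpa [roundCircle, sq] using this, by simp [roundCircle]⟩
  · rintro ⟨hp, hp'⟩
    have hnorm : ‖(⟨p 0, p 1⟩ : ℂ)‖ = 1 := by
      rw [Complex.norm_eq_sqrt_sq_add_sq, hp, Real.sqrt_one]
    let w : Circle := ⟨⟨p 0, p 1⟩, mem_sphere_zero_iff_norm.2 hnorm⟩
    obtain ⟨z, hz⟩ := (AddCircle.homeomorphCircle one_ne_zero).surjective w
    rw [AddCircle.homeomorphCircle_apply one_ne_zero] at hz
    refine ⟨z, ?_⟩
    ext i
    fin_cases i <;> simp [roundCircle, hz, w, hp']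

lemma isUnimodal_of_eq_mul_cos {F : AddCircle (1 : ℝ) → ℝ} {r φ : ℝ} (hr : 0 ≤ r)
    (hF : ∀ t : ℝ, F t = r * Real.cos (2 * Real.pi * t - φ)) : IsUnimodal F := by
  have hφ : 2 * Real.pi * (φ / (2 * Real.pi)) = φ := mul_div_cancel₀ _ (by positivity)
  have hpi := Real.pi_pos
  refine ⟨φ / (2 * Real.pi) - 1 / 2, φ / (2 * Real.pi), by linarith, by linarith,
    fun x hx y hy hxy => ?_, fun x hx y hy hxy => ?_⟩ <;> simp only [hF]
  · rw [← Real.cos_neg, ← Real.cos_neg (_ * y - _)]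
    gcongr
    apply Real.cos_le_cos_of_nonneg_of_le_pi <;> nlinarith [hx.1, hy.2]
  · gcongr
    apply Real.cos_le_cos_of_nonneg_of_le_pi <;> nlinarith [hx.1, hy.2]

open scoped RealInnerProductSpace in
lemma isUnimodal_inner_roundCircle (v : EuclideanSpace ℝ (Fin 3)) :
    IsUnimodal fun z => ⟪roundCircle z, v⟫ := by
  refine isUnimodal_of_eq_mul_cos (φ := Complex.arg ⟨v 0, v 1⟩) (norm_nonneg (⟨v 0, v 1⟩ : ℂ))
    fun t => ?_
  rw [Real.cos_sub]
  have hcos := Complex.norm_mul_cos_arg ⟨v 0, v 1⟩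
  have hsin := Complex.norm_mul_sin_arg ⟨v 0, v 1⟩
  rw [mul_add, mul_left_comm, hcos, mul_left_comm, hsin, roundCircle_coe]
  simp only [PiLp.inner_apply, RCLike.inner_apply, Real.ringHom_apply, Fin.sum_univ_three,
    Fin.isValue, Matrix.cons_val_zero, Matrix.cons_val_one, Matrix.cons_val, mul_zero, add_zero]
  ring

end RoundCircle

section Coordinates

variable {E : Type*} [NormedAddCommGroup E] [NormedSpace ℝ E]

lemma exists_continuousLinearEquiv_snd_eq (hE : Module.finrank ℝ E = 3) {f : E →L[ℝ] ℝ}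
    (hf : f ≠ 0) : ∃ e : E ≃L[ℝ] ℂ × ℝ, ∀ x, (e x).2 = f x := by
  obtain ⟨x, hx⟩ : ∃ x, f x ≠ 0 := by
    by_contra! h
    exact hf (ContinuousLinearMap.ext h)
  have : FiniteDimensional ℝ E := Module.finite_of_finrank_eq_succ hE
  let e₀ := ContinuousLinearEquiv.equivOfRightInverse f
    (ContinuousLinearMap.toSpanSingleton ℝ ((f x)⁻¹ • x)) fun y => by simp [hx]
  have hker : Module.finrank ℝ f.ker = Module.finrank ℝ ℂ := by
    have := e₀.toLinearEquiv.finrank_eq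
    rw [Module.finrank_prod, hE, Module.finrank_self] at this
    rw [Complex.finrank_real_complex]
    omega
  exact ⟨e₀.trans ((ContinuousLinearEquiv.prodComm ℝ ℝ _).trans
    ((ContinuousLinearEquiv.ofFinrankEq hker).prodCongr (.refl ℝ ℝ))), fun y => by simp [e₀]⟩

lemma IsUnimodal.ambientIsotopic_of_finrank_eq_three (hE : Module.finrank ℝ E = 3)
    {f : E →L[ℝ] ℝ} (hf : f ≠ 0) {κ κ' : AddCircle (1 : ℝ) → E} (hκ : Continuous κ)
    (hinj : Function.Injective κ) (h : IsUnimodal (f ∘ κ)) (hκ' : Continuous κ')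
    (hinj' : Function.Injective κ') (h' : IsUnimodal (f ∘ κ')) :
    AmbientIsotopic (range κ) (range κ') := by
  obtain ⟨e, he⟩ := exists_continuousLinearEquiv_snd_eq hE hf
  apply AmbientIsotopic.of_image e.toHomeomorph
  rw [← range_comp, ← range_comp]
  refine IsUnimodal.ambientIsotopic (e.continuous.comp hκ) (e.injective.comp hinj) ?_
    (e.continuous.comp hκ') (e.injective.comp hinj') ?_
  · exact (funext fun z => he (κ z) : (fun z => (e (κ z)).2) = f ∘ κ) ▸ h
  · exact (funext fun z => he (κ' z) : (fun z => (e (κ' z)).2) = f ∘ κ') ▸ h'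

end Coordinates

open scoped RealInnerProductSpace in
lemma unknotted_of_isUnimodal {K : AddCircle (1 : ℝ) → EuclideanSpace ℝ (Fin 3)}
    (hK : Continuous K) (hinj : Function.Injective K) {v : EuclideanSpace ℝ (Fin 3)} (hv : v ≠ 0)
    (h : IsUnimodal fun z => ⟪K z, v⟫) : Unknotted K := by
  have hf : innerSL ℝ v ≠ 0 := fun h => hv (by simpa using congrArg (‖·‖) h)
  have hinner (κ : AddCircle (1 : ℝ) → EuclideanSpace ℝ (Fin 3)) :
      innerSL ℝ v ∘ κ = fun z => ⟪κ z, v⟫ := funext fun z => real_inner_comm (κ z) v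
  apply AmbientIsotopic.unknotted
  rw [← range_roundCircle]
  exact IsUnimodal.ambientIsotopic_of_finrank_eq_three finrank_euclideanSpace_fin hf hK hinj
    (hinner K ▸ h) continuous_roundCircle roundCircle_injective
    (hinner roundCircle ▸ isUnimodal_inner_roundCircle v)

open scoped RealInnerProductSpace in
theorem milnor_projection_lemma_general (K : AddCircle (1 : ℝ) → EuclideanSpace ℝ (Fin 3))
    (hK : Continuous K) (hinj : Function.Injective K) (hknot : ¬ Unknotted K)
    (v : EuclideanSpace ℝ (Fin 3)) (hv : v ≠ 0) :
    ENNReal.ofReal (4 * Real.pi) ≤ loopTC (fun t => (⟪K t, v⟫ : ℝ)) := by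
  by_contra hlt
  refine hknot (unknotted_of_isUnimodal hK hinj hv ?_)
  exact isUnimodal_of_forall_not_isAlternating (hK.inner continuous_const)
    fun a b c d h => hlt h.four_pi_le_loopTC

open scoped RealInnerProductSpace in
/-- Milnor's lemma: for a knotted closed curve `K` in `ℝ³` and any unit
vector `v`, the projection `t ↦ ⟨K t, v⟩` of `K` to the line in direction `v` has total
curvature at least `4π`. -/
theorem milnor_projection_lemma (K : AddCircle (1 : ℝ) → EuclideanSpace ℝ (Fin 3))
    (hK : Continuous K) (hinj : Function.Injective K) (hknot : ¬ Unknotted K)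
    (v : EuclideanSpace ℝ (Fin 3)) (hv : ‖v‖ = 1) :
    ENNReal.ofReal (4 * Real.pi) ≤ loopTC (fun t => (⟪K t, v⟫ : ℝ)) := by
  exact milnor_projection_lemma_general K hK hinj hknot v (norm_ne_zero_iff.1 (hv ▸ one_ne_zero))
end
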